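/- arXiv:1604.05020 — 4 statements merged into one kernel-verified Lean document; each statement's English description precedes it below -/
import Mathlib

section
/- Let k ≥ 3 be an even integer and let G be a finite simple graph with c connected components, n vertices, m edges, and maximum degree at most k. If no connected component of G is a k-regular graph, then the matching number satisfies α'(G) ≥ (1/(k(k+1)))·(n − c) + (1/(k+1))·m. -/
/-!
The proof combines the Tutte–Berge formula with edge counting.

By Tutte–Berge there is a set `S` of vertices such that, if `H` is `G` with all edges at `S`
deleted (`isolate G S`), then the matching number is at least `|S| + ∑ ⌊|C| / 2⌋`, the sum running
over the components `C` of `H`; the vertices of `S` are singleton components and contribute `0`.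
This is derived in `tutte_berge` from Tutte's theorem, applied to the join of `G` with a complete
graph.

Each component `C` of `H` satisfies `|C| - 1 + k * m(C) ≤ k (k + 1) ⌊|C| / 2⌋`
(`component_arith`): `m(C)` is at most `|C| (|C| - 1) / 2`, and `C` is not `k`-regular since it would
otherwise be a `k`-regular component of `G`, so for even `k` parity gives `2 m(C) ≤ k |C| - 2`.
Summing over `C` gives `n - c(H) + k * m(H) ≤ k (k + 1) ∑ ⌊|C| / 2⌋`. At most `k |S|` edges were
deleted, and putting one back raises `n - c + k m` by at most `k + 1`, hence
`n - c(G) + k * m(G) ≤ k (k + 1) (|S| + ∑ ⌊|C| / 2⌋)`.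
-/


/-- The matching number of a simple graph: the maximum number of edges in a matching. -/
noncomputable def matchingNumber {V : Type*} (G : SimpleGraph V) : ℕ :=
  sSup {n | ∃ M : G.Subgraph, M.IsMatching ∧ M.edgeSet.ncard = n}

/-! ### Components under edge deletion -/

/-- Deleting one edge splits at most one component into two. -/
lemma card_components_deleteEdge {V : Type*} [Finite V] (G : SimpleGraph V) (e : Sym2 V) :
    Nat.card (G.deleteEdges {e}).ConnectedComponent ≤ Nat.card G.ConnectedComponent + 1 := by
  classical
  induction e using Sym2.ind with
  | _ u v =>
  set H := G.deleteEdges {s(u, v)} with hH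
  have key : ∀ a b, G.Walk a b → H.Reachable a b ∨
      ((H.Reachable a u ∨ H.Reachable a v) ∧ (H.Reachable b u ∨ H.Reachable b v)) := by
    intro a b p
    induction p with
    | nil => exact Or.inl (.refl _)
    | @cons x y z h p ih =>
      by_cases hxy : s(x, y) = s(u, v)
      · have hx : H.Reachable x u ∨ H.Reachable x v := by
          rcases Sym2.eq_iff.1 hxy with ⟨rfl, rfl⟩ | ⟨rfl, rfl⟩
          · exact Or.inl (.refl _)
          · exact Or.inr (.refl _)
        have hy : H.Reachable y u ∨ H.Reachable y v := by
          rcases Sym2.eq_iff.1 hxy with ⟨rfl, rfl⟩ | ⟨rfl, rfl⟩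
          · exact Or.inr (.refl _)
          · exact Or.inl (.refl _)
        refine Or.inr ⟨hx, ?_⟩
        rcases ih with ih | ih
        · exact hy.imp ih.symm.trans ih.symm.trans
        · exact ih.2
      · have hr : H.Reachable x y := by
          apply SimpleGraph.Adj.reachable
          rw [hH, SimpleGraph.deleteEdges_adj]
          exact ⟨h, by simpa using hxy⟩
        rcases ih with ih | ih
        · exact Or.inl (hr.trans ih)
        · exact Or.inr ⟨ih.1.imp hr.trans hr.trans, ih.2⟩
  -- Away from the component of `u`, the map from components of `H` to components of `G` is
  -- injective.
  let f : H.ConnectedComponent → Option G.ConnectedComponent := fun C =>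
    if C = H.connectedComponentMk u then none
    else some (C.map (SimpleGraph.Hom.ofLE (G.deleteEdges_le _)))
  have hf : Function.Injective f := by
    intro C D
    induction C using SimpleGraph.ConnectedComponent.ind with | _ a =>
    induction D using SimpleGraph.ConnectedComponent.ind with | _ b =>
    intro h
    by_cases h1 : H.connectedComponentMk a = H.connectedComponentMk u <;>
    by_cases h2 : H.connectedComponentMk b = H.connectedComponentMk u
    · rw [h1, h2]
    · simp [f, h1, h2] at h
    · simp [f, h1, h2] at h
    · simp only [f, h1, h2, if_false, Option.some.injEq] at h
      obtain ⟨p⟩ : G.Reachable a b := SimpleGraph.ConnectedComponent.exact h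
      rw [SimpleGraph.ConnectedComponent.eq] at h1 h2 ⊢
      rcases key _ _ p with h | ⟨ha, hb⟩
      · exact h
      · exact (ha.resolve_left h1).trans (hb.resolve_left h2).symm
  have := Nat.card_le_card_of_injective f hf
  rwa [Finite.card_option] at this

lemma card_components_deleteEdges {V : Type*} [Finite V] (G : SimpleGraph V)
    (F : Finset (Sym2 V)) :
    Nat.card (G.deleteEdges (F : Set (Sym2 V))).ConnectedComponent
      ≤ Nat.card G.ConnectedComponent + F.card := by
  classical
  induction F using Finset.induction_on with
  | empty => simp
  | insert e F he ih =>
    have h := card_components_deleteEdge (G.deleteEdges (F : Set (Sym2 V))) e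
    rw [SimpleGraph.deleteEdges_deleteEdges] at h
    rw [Finset.card_insert_of_notMem he, Finset.coe_insert, Set.insert_eq, Set.union_comm]
    omega

/-! ### Isolating a set of vertices -/

/-- The graph on all of `V` obtained from `G` by deleting every edge that meets `S`, so that
the vertices of `S` stay on as isolated vertices. -/
def isolate {V : Type*} (G : SimpleGraph V) (S : Set V) : SimpleGraph V where
  Adj a b := G.Adj a b ∧ a ∉ S ∧ b ∉ S
  symm := ⟨fun _ _ h => ⟨h.1.symm, h.2.2, h.2.1⟩⟩
  loopless := ⟨fun _ h => h.1.ne rfl⟩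

lemma isolate_adj {V : Type*} (G : SimpleGraph V) (S : Set V) (a b : V) :
    (isolate G S).Adj a b ↔ G.Adj a b ∧ a ∉ S ∧ b ∉ S := Iff.rfl

lemma isolate_le {V : Type*} (G : SimpleGraph V) (S : Set V) : isolate G S ≤ G :=
  fun _ _ h => h.1

lemma isolate_supp_of_mem {V : Type*} (G : SimpleGraph V) (S : Set V) {s : V} (hs : s ∈ S) :
    ((isolate G S).connectedComponentMk s).supp = {s} := by
  ext v
  simp only [SimpleGraph.ConnectedComponent.mem_supp_iff, SimpleGraph.ConnectedComponent.eq,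
    Set.mem_singleton_iff]
  constructor
  · rintro ⟨p⟩
    by_contra hne
    have := p.reverse
    cases this with
    | nil => exact hne rfl
    | cons h _ => exact h.2.1 hs
  · rintro rfl
    exact .refl _

/-! ### The Tutte–Berge bound -/

/-- The join of `G` with a complete graph on `Fin d`. -/
def joinTop {V : Type*} (G : SimpleGraph V) (d : ℕ) : SimpleGraph (V ⊕ Fin d) where
  Adj x y := match x, y with
    | .inl a, .inl b => G.Adj a b
    | x, y => x ≠ y
  symm := ⟨by rintro (a | a) (b | b) h <;> first | exact G.adj_symm h | exact fun e => h e.symm⟩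
  loopless := ⟨by rintro (a | a) h <;> first | exact G.loopless.irrefl _ h | exact h rfl⟩

lemma matching_le {V : Type*} [Finite V] (G : SimpleGraph V) (M : G.Subgraph)
    (hM : M.IsMatching) : M.edgeSet.ncard ≤ matchingNumber G := by
  apply le_csSup
  · refine ⟨Nat.card (Sym2 V), ?_⟩
    rintro _ ⟨M, -, rfl⟩
    exact Set.ncard_le_card _
  · exact ⟨M, hM, rfl⟩

lemma matching_verts_le {V : Type*} [Finite V] (G : SimpleGraph V) (M : G.Subgraph)
    (hM : M.IsMatching) : M.verts.ncard ≤ 2 * matchingNumber G := by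
  classical
  have := Fintype.ofFinite V
  refine le_trans ?_ (Nat.mul_le_mul_left 2 (matching_le G M hM))
  rw [hM.verts_eq_biUnion_edgeSet]
  have h1 : (⋃ e ∈ M.edgeSet, (e : Set V)) =
      ((M.edgeSet.toFinset.biUnion fun e => e.toFinset : Finset V) : Set V) := by
    ext v; simp
  rw [h1, Set.ncard_coe_finset, Set.ncard_eq_toFinset_card', mul_comm]
  apply Finset.card_biUnion_le_card_mul
  intro e _
  induction e using Sym2.ind with
  | _ a b => rw [Sym2.toFinset_mk_eq]; exact Finset.card_le_two

/-- A perfect matching of the join uses at most `d` of its edges to cover `Fin d`, so its trace on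
`V` misses at most `d` vertices. -/
lemma card_le_of_join_perfect {V : Type*} [Finite V] (G : SimpleGraph V) (d : ℕ)
    (M : (joinTop G d).Subgraph) (hM : M.IsPerfectMatching) :
    Nat.card V ≤ 2 * matchingNumber G + d := by
  classical
  have := Fintype.ofFinite V
  let N : G.Subgraph :=
    { verts := {a | ∃ b, M.Adj (.inl a) (.inl b)}
      Adj := fun a b => M.Adj (.inl a) (.inl b)
      adj_sub := fun h => M.adj_sub h
      edge_vert := fun h => ⟨_, h⟩
      symm := ⟨fun _ _ h => M.adj_symm h⟩ }
  have hN : N.IsMatching := by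
    rintro a ⟨b, hb⟩
    exact ⟨b, hb, fun c hc => Sum.inl_injective (hM.1.eq_of_adj_left hc hb)⟩
  have h1 := matching_verts_le G N hN
  have h2 : (N.vertsᶜ).ncard ≤ d := by
    have hex : ∀ a : (N.vertsᶜ : Set V), ∃ i : Fin d, M.Adj (.inl a.1) (.inr i) := by
      rintro ⟨a, ha⟩
      obtain ⟨w, hw, -⟩ := hM.1 (hM.2 (.inl a))
      rcases w with b | i
      · exact absurd ⟨b, hw⟩ ha
      · exact ⟨i, hw⟩
    choose f hf using hex
    have hinj : Function.Injective f := by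
      intro a b hab
      have h := hf b
      rw [← hab] at h
      exact Subtype.ext (Sum.inl_injective (hM.1.eq_of_adj_right (hf a) h))
    have := Nat.card_le_card_of_injective f hinj
    rwa [Nat.card_coe_set_eq, Nat.card_fin] at this
  have h3 := Set.ncard_add_ncard_compl N.verts
  omega

/-- A Tutte set `u` of the join that contains all of `Fin d` traces a set `S` on `V`; the odd
components that `u` leaves over survive in `isolate G S`, and each vertex of `S` is one more. -/
lemma odd_components_isolate {V : Type*} [Finite V] (G : SimpleGraph V) (d : ℕ)
    (u : Set (V ⊕ Fin d)) (hu : ∀ i, Sum.inr i ∈ u) :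
    ((⊤ : (joinTop G d).Subgraph).deleteVerts u).coe.oddComponents.ncard + (Sum.inl ⁻¹' u).ncard
      ≤ (isolate G (Sum.inl ⁻¹' u)).oddComponents.ncard := by
  classical
  set K := ((⊤ : (joinTop G d).Subgraph).deleteVerts u).coe with hK
  set S : Set V := Sum.inl ⁻¹' u with hS
  set G' := isolate G S with hG'
  have hex : ∀ x : ((⊤ : (joinTop G d).Subgraph).deleteVerts u).verts, ∃ a : V,
      x.1 = .inl a ∧ a ∉ S := by
    rintro ⟨x | i, hx⟩
    · exact ⟨x, rfl, by simpa [hS] using hx⟩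
    · simp [hu] at hx
  choose φ hφ hφS using hex
  have hadj : ∀ x y, K.Adj x y ↔ G'.Adj (φ x) (φ y) := by
    intro x y
    have hx := hφ x
    have hy := hφ y
    have hx' := hφS x
    have hy' := hφS y
    rw [hK, SimpleGraph.Subgraph.coe_adj, hx, hy]
    simp only [hS, Set.mem_preimage] at hx' hy'
    rw [SimpleGraph.Subgraph.deleteVerts_adj]
    simp only [SimpleGraph.Subgraph.verts_top, Set.mem_univ, true_and, hx', hy', not_false_eq_true,
      SimpleGraph.Subgraph.top_adj]
    simp [hG', isolate, hS, hx', hy', joinTop]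
  have hinj : Function.Injective φ := by
    intro x y h
    apply Subtype.ext
    rw [hφ x, hφ y, h]
  have hsurj : ∀ a, a ∉ S → ∃ x, φ x = a := by
    intro a ha
    refine ⟨⟨.inl a, by simpa [hS] using ha⟩, ?_⟩
    exact (Sum.inl_injective (hφ ⟨.inl a, by simpa [hS] using ha⟩)).symm
  let f : K →g G' := ⟨φ, fun {x y} h => (hadj x y).1 h⟩
  -- Walks of `G'` that start outside `S` lift to `K`.
  have hreach : ∀ a b, G'.Walk a b → ∀ x, φ x = a → ∃ y, φ y = b ∧ K.Reachable x y := by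
    intro a b p
    induction p with
    | nil => intro x hx; exact ⟨x, hx, .refl _⟩
    | cons h p ih =>
      intro x hx
      obtain ⟨y, hy⟩ := hsurj _ h.2.2
      obtain ⟨z, hz, hyz⟩ := ih y hy
      refine ⟨z, hz, SimpleGraph.Reachable.trans (SimpleGraph.Adj.reachable ?_) hyz⟩
      rw [hadj, hx, hy]; exact h
  have hsupp : ∀ D : K.ConnectedComponent, (D.map f).supp = φ '' D.supp := by
    intro D
    induction D using SimpleGraph.ConnectedComponent.ind with | _ x =>
    ext b
    simp only [SimpleGraph.ConnectedComponent.map_mk, SimpleGraph.ConnectedComponent.mem_supp_iff,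
      SimpleGraph.ConnectedComponent.eq, Set.mem_image]
    constructor
    · rintro ⟨p⟩
      obtain ⟨y, hy, h⟩ := hreach _ _ p.reverse x rfl
      exact ⟨y, h.symm, hy⟩
    · rintro ⟨y, h, rfl⟩
      exact h.map f
  have hmapinj : Function.Injective (fun D : K.ConnectedComponent => D.map f) := by
    intro C D h
    apply SimpleGraph.ConnectedComponent.supp_injective
    apply hinj.image_injective
    rw [← hsupp, ← hsupp]
    exact congrArg _ h
  have hsub : (fun D : K.ConnectedComponent => D.map f) '' K.oddComponents ∪
      G'.connectedComponentMk '' S ⊆ G'.oddComponents := by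
    rintro _ (⟨D, hD, rfl⟩ | ⟨s, hs, rfl⟩)
    · change Odd (D.map f).supp.ncard
      rw [hsupp, Set.ncard_image_of_injective _ hinj]
      exact hD
    · change Odd (G'.connectedComponentMk s).supp.ncard
      rw [isolate_supp_of_mem G S hs]
      simp
  have hdisj : Disjoint ((fun D : K.ConnectedComponent => D.map f) '' K.oddComponents)
      (G'.connectedComponentMk '' S) := by
    rw [Set.disjoint_left]
    rintro _ ⟨D, hD, rfl⟩ ⟨s, hs, h⟩
    have h1 : s ∈ (D.map f).supp := by
      change G'.connectedComponentMk s = D.map f at h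
      rw [← h]; rfl
    rw [hsupp] at h1
    obtain ⟨x, -, rfl⟩ := h1
    exact hφS x hs
  have hSinj : Set.InjOn G'.connectedComponentMk S := by
    intro s hs t ht h
    have h1 := isolate_supp_of_mem G S hs
    have h2 := isolate_supp_of_mem G S ht
    rw [← hG', h, h2] at h1
    exact (Set.singleton_injective h1).symm
  rw [← Set.ncard_image_of_injective _ hmapinj, ← hSinj.ncard_image,
    ← Set.ncard_union_eq hdisj (Set.toFinite _) (Set.toFinite _)]
  exact Set.ncard_le_ncard hsub (Set.toFinite _)

/-- Halving the component sizes loses one half for each odd component. -/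
lemma sum_half_components {V : Type*} [Fintype V] (G : SimpleGraph V)
    [Fintype G.ConnectedComponent] :
    2 * ∑ C : G.ConnectedComponent, C.supp.ncard / 2 + G.oddComponents.ncard = Nat.card V := by
  classical
  have h1 : G.oddComponents.ncard = ∑ C : G.ConnectedComponent, C.supp.ncard % 2 := by
    rw [Set.ncard_eq_toFinset_card', Finset.card_eq_sum_ones]
    rw [show (SimpleGraph.oddComponents G).toFinset =
      Finset.univ.filter (fun C : G.ConnectedComponent => Odd C.supp.ncard) by ext; simp]
    rw [Finset.sum_filter]
    refine Finset.sum_congr rfl fun C _ => ?_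
    split_ifs with h
    · exact (Nat.odd_iff.1 h).symm
    · exact (Nat.even_iff.1 (Nat.not_odd_iff_even.1 h)).symm
  have h2 : Nat.card V = ∑ C : G.ConnectedComponent, C.supp.ncard := by
    rw [Nat.card_eq_fintype_card, ← Finset.card_univ,
      Finset.card_eq_sum_card_fiberwise (f := G.connectedComponentMk) (t := Finset.univ)
        (fun _ _ => Finset.mem_coe.2 (Finset.mem_univ _))]
    refine Finset.sum_congr rfl fun C _ => ?_
    rw [← Set.ncard_coe_finset]
    congr 1
    ext; simp
  rw [h1, h2, Finset.mul_sum, ← Finset.sum_add_distrib]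
  exact Finset.sum_congr rfl fun C _ => by omega

/-- The hard half of the Tutte–Berge formula, phrased through `isolate`: some set `S` together
with the rounded-down halves of the components left over is a lower bound for the matching
number. -/
lemma tutte_berge {V : Type*} [Fintype V] (G : SimpleGraph V) :
    ∃ S : Set V, ∀ [Fintype (isolate G S).ConnectedComponent],
      S.ncard + ∑ C : (isolate G S).ConnectedComponent, C.supp.ncard / 2 ≤ matchingNumber G := by
  classical
  by_cases hn : Nat.card V ≤ 2 * matchingNumber G + 1
  · refine ⟨∅, ?_⟩
    intro _
    have := sum_half_components (isolate G ∅)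
    simp only [Set.ncard_empty]
    omega
  · -- `d` has the parity of `|V|`, and is two below the deficiency of a maximum matching.
    obtain ⟨d, hd⟩ : ∃ d, Nat.card V = 2 * matchingNumber G + 2 + d :=
      ⟨_, (Nat.add_sub_of_le (by omega)).symm⟩
    have hno : ¬ ∃ M : (joinTop G d).Subgraph, M.IsPerfectMatching := by
      rintro ⟨M, hM⟩
      have := card_le_of_join_perfect G d M hM
      omega
    rw [SimpleGraph.tutte] at hno
    push Not at hno
    obtain ⟨u, hu⟩ := hno
    rw [SimpleGraph.IsTutteViolator] at hu
    have hpar := SimpleGraph.odd_ncard_oddComponents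
      (G := ((⊤ : (joinTop G d).Subgraph).deleteVerts u).coe)
    have hcard : Nat.card ((⊤ : (joinTop G d).Subgraph).deleteVerts u).verts + u.ncard =
        Nat.card V + d := by
      have h1 : ((⊤ : (joinTop G d).Subgraph).deleteVerts u).verts = uᶜ := by
        ext; simp
      rw [h1, Nat.card_coe_set_eq, add_comm, Set.ncard_add_ncard_compl]
      simp
    have htwo : u.ncard + 2 ≤
        ((⊤ : (joinTop G d).Subgraph).deleteVerts u).coe.oddComponents.ncard := by
      rw [Nat.odd_iff, Nat.odd_iff] at hpar
      omega
    -- A vertex of `Fin d` outside `u` is universal, leaving at most one odd component.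
    have hall : ∀ i, Sum.inr i ∈ u := by
      intro i
      by_contra hi
      have hconn : ((⊤ : (joinTop G d).Subgraph).deleteVerts u).coe.Connected := by
        refine SimpleGraph.Connected.of_isUniversal (v := ⟨.inr i, by simpa using hi⟩) ?_
        rintro ⟨y, hy⟩ hne
        simp only [SimpleGraph.Subgraph.coe_adj]
        have hne' : Sum.inr i ≠ y := fun h => hne (Subtype.ext h)
        have : (joinTop G d).Adj (.inr i) y := by
          cases y <;> exact hne'
        replace hy : y ∉ u := by simpa using hy
        rw [SimpleGraph.Subgraph.deleteVerts_adj]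
        exact ⟨Set.mem_univ _, hi, Set.mem_univ _, hy, this⟩
      have := hconn.preconnected.subsingleton_connectedComponent
      have h1 := Set.ncard_le_one_of_subsingleton
        ((⊤ : (joinTop G d).Subgraph).deleteVerts u).coe.oddComponents
      omega
    refine ⟨Sum.inl ⁻¹' u, ?_⟩
    intro _
    have h1 := odd_components_isolate G d u hall
    have h2 := sum_half_components (isolate G (Sum.inl ⁻¹' u))
    have h3 : (Sum.inl ⁻¹' u : Set V).ncard + d = u.ncard := by
      have h4 : u = Sum.inl '' (Sum.inl ⁻¹' u : Set V) ∪ Set.range (Sum.inr : Fin d → V ⊕ Fin d) := by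
        ext (a | i) <;> simp [hall]
      conv_rhs => rw [h4]
      rw [Set.ncard_union_eq (by
          rw [Set.disjoint_left]; rintro _ ⟨a, -, rfl⟩ ⟨i, h⟩; cases h)
          (Set.toFinite _) (Set.toFinite _),
        Set.ncard_image_of_injective _ Sum.inl_injective, ← Set.image_univ,
        Set.ncard_image_of_injective _ Sum.inr_injective]
      simp
    omega

/-! ### Counting edges -/

/-- `N` is the order of a component left over by `S`, and `D` its degree sum. The bound is tight
for `N = k + 1`, `D = kN - 2`, which is where the parity of `k` and of `D` enters. -/
lemma component_arith (k N D : ℕ) (hk : 3 ≤ k) (hke : Even k) (hN : 1 ≤ N) (hD : Even D)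
    (h1 : D ≤ N * (N - 1)) (h2 : D + 1 ≤ k * N) :
    2 * N + k * D ≤ 2 * (k * (k + 1)) * (N / 2) + 2 := by
  obtain ⟨t, rfl | rfl⟩ := Nat.even_or_odd' N
  · have : 2 * t / 2 = t := by omega
    rw [this]
    nlinarith
  · have ht : (2 * t + 1) / 2 = t := by omega
    have ht' : 2 * t + 1 - 1 = 2 * t := by omega
    rw [ht]
    rw [ht'] at h1
    rcases Nat.lt_or_ge k (2 * t + 1) with hlt | hge
    · have h3 : D + 2 ≤ k * (2 * t + 1) := by
        have : Even (k * (2 * t + 1)) := hke.mul_right _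
        rw [Nat.even_iff] at this hD
        omega
      have h4 : k * (D + 2) ≤ k * (k * (2 * t + 1)) := Nat.mul_le_mul_left k h3
      obtain ⟨a, rfl⟩ : ∃ a, k = a + 2 := ⟨k - 2, by omega⟩
      have h5 : a * (a + 2) ≤ a * (2 * t) := Nat.mul_le_mul_left a (by omega)
      nlinarith
    · have h4 : k * D ≤ k * ((2 * t + 1) * (2 * t)) := Nat.mul_le_mul_left k h1
      have h5 : k * (2 * t) * (2 * t + 1) ≤ k * (2 * t) * k := Nat.mul_le_mul_left _ hge
      nlinarith

lemma even_sum_degree_component {V : Type*} [Fintype V] (G : SimpleGraph V) [DecidableRel G.Adj]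
    [DecidableEq G.ConnectedComponent] (C : G.ConnectedComponent) :
    Even (∑ v with G.connectedComponentMk v = C, G.degree v) := by
  classical
  have h := (isolate G C.suppᶜ).sum_degrees_eq_twice_card_edges
  have h2 : ∑ v with G.connectedComponentMk v = C, G.degree v =
      ∑ v, (isolate G C.suppᶜ).degree v := by
    rw [Finset.sum_filter]
    refine Finset.sum_congr rfl fun v _ => ?_
    split_ifs with hv
    · rw [← SimpleGraph.card_neighborFinset_eq_degree, ← SimpleGraph.card_neighborFinset_eq_degree]
      congr 1
      ext w
      simp only [SimpleGraph.mem_neighborFinset, isolate_adj, Set.mem_compl_iff, not_not]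
      exact ⟨fun hw => ⟨hw, hv, C.mem_supp_of_adj_mem_supp hv hw⟩, fun hw => hw.1⟩
    · symm
      rw [← SimpleGraph.card_neighborFinset_eq_degree, Finset.card_eq_zero]
      ext w
      simp only [SimpleGraph.mem_neighborFinset, isolate_adj, Set.mem_compl_iff, not_not,
        Finset.notMem_empty, iff_false]
      exact fun hw => hv hw.2.1
  rw [h2, h]
  exact even_two_mul _

lemma degree_isolate_le {V : Type*} [Fintype V] (G : SimpleGraph V) [DecidableRel G.Adj]
    (S : Set V) [DecidableRel (isolate G S).Adj] (v : V) :
    (isolate G S).degree v ≤ G.degree v :=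
  SimpleGraph.degree_le_of_le (isolate_le G S)

/-- A component all of whose vertices keep degree `k` after edges are deleted from a graph of
maximum degree at most `k` lost no edge, so it is a `k`-regular component of the original graph. -/
lemma exists_degree_lt {V : Type*} [Fintype V] (k : ℕ) (G : SimpleGraph V) [DecidableRel G.Adj]
    (hdeg : ∀ v, G.degree v ≤ k)
    (hnoreg : ∀ C : G.ConnectedComponent, ¬ ∀ v ∈ C.supp, G.degree v = k)
    (S : Set V) [DecidableRel (isolate G S).Adj] (C : (isolate G S).ConnectedComponent) :
    ∃ v ∈ C.supp, (isolate G S).degree v < k := by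
  by_contra! hall
  have hnb : ∀ v ∈ C.supp, ∀ w, G.Adj v w → (isolate G S).Adj v w := by
    intro v hv w hw
    have hsub : (isolate G S).neighborFinset v ⊆ G.neighborFinset v := by
      intro x hx
      rw [SimpleGraph.mem_neighborFinset] at hx ⊢
      exact isolate_le G S hx
    have heq := Finset.eq_of_subset_of_card_le hsub (by
      rw [SimpleGraph.card_neighborFinset_eq_degree, SimpleGraph.card_neighborFinset_eq_degree]
      exact (hdeg v).trans (hall v hv))
    rw [← SimpleGraph.mem_neighborFinset, heq, SimpleGraph.mem_neighborFinset]
    exact hw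
  obtain ⟨v, hv⟩ := C.nonempty_supp
  have hwalk : ∀ a b, G.Walk a b → a ∈ C.supp → b ∈ C.supp := by
    intro a b p
    induction p with
    | nil => exact id
    | cons h p ih => exact fun ha => ih (C.mem_supp_of_adj_mem_supp ha (hnb _ ha _ h))
  refine hnoreg (G.connectedComponentMk v) fun w hw => ?_
  obtain ⟨p⟩ := SimpleGraph.ConnectedComponent.exact hw
  have hwC := hwalk _ _ p.reverse hv
  exact le_antisymm (hdeg w) ((hall w hwC).trans (degree_isolate_le G S w))

/-- The inequality multiplied by `k (k + 1)`, with the negative term moved to the right. -/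
lemma main_nat (k : ℕ) (hk3 : 3 ≤ k) (hkeven : Even k)
    {V : Type*} [Fintype V] (G : SimpleGraph V) [DecidableRel G.Adj]
    (hdeg : ∀ v, G.degree v ≤ k)
    (hnoreg : ∀ C : G.ConnectedComponent, ¬ ∀ v ∈ C.supp, G.degree v = k) :
    Fintype.card V + k * G.edgeFinset.card
      ≤ k * (k + 1) * matchingNumber G + Nat.card G.ConnectedComponent := by
  classical
  obtain ⟨S, hS⟩ := tutte_berge G
  set H := isolate G S with hH
  have := Fintype.ofFinite H.ConnectedComponent
  have hS' := @hS this
  have hcomp : ∀ C : H.ConnectedComponent,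
      2 * C.supp.ncard + k * (∑ v with H.connectedComponentMk v = C, H.degree v)
        ≤ 2 * (k * (k + 1)) * (C.supp.ncard / 2) + 2 := by
    intro C
    have hcard : C.supp.ncard = (Finset.univ.filter (H.connectedComponentMk · = C)).card := by
      rw [← Set.ncard_coe_finset]
      congr 1
      ext; simp
    refine component_arith k _ _ hk3 hkeven ?_ (even_sum_degree_component H C) ?_ ?_
    · exact C.nonempty_supp.ncard_pos
    · rw [hcard, ← smul_eq_mul]
      refine Finset.sum_le_card_nsmul _ _ _ fun v hv => ?_
      have hv' := (Finset.mem_filter.1 hv).2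
      rw [← Finset.card_erase_of_mem hv, ← SimpleGraph.card_neighborFinset_eq_degree]
      refine Finset.card_le_card fun w hw => ?_
      rw [SimpleGraph.mem_neighborFinset] at hw
      simp only [Finset.mem_erase, Finset.mem_filter, Finset.mem_univ, true_and]
      exact ⟨hw.ne', C.mem_supp_of_adj_mem_supp hv' hw⟩
    · obtain ⟨v, hv, hlt⟩ := exists_degree_lt k G hdeg hnoreg S C
      rw [hcard, Nat.succ_le_iff, mul_comm, ← smul_eq_mul, ← Finset.sum_const]
      refine Finset.sum_lt_sum (fun w _ => ?_) ⟨v, ?_, hlt⟩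
      · exact (degree_isolate_le G S w).trans (hdeg w)
      · simpa using hv
  have hsum := Finset.sum_le_sum fun C (_ : C ∈ Finset.univ) => hcomp C
  simp only [Finset.sum_add_distrib, ← Finset.mul_sum] at hsum
  have hfib : ∑ C, ∑ v with H.connectedComponentMk v = C, H.degree v = ∑ v, H.degree v := by
    convert Finset.sum_fiberwise Finset.univ H.connectedComponentMk fun v => H.degree v
  rw [hfib, SimpleGraph.sum_degrees_eq_twice_card_edges] at hsum
  have hn : ∑ C : H.ConnectedComponent, C.supp.ncard = Fintype.card V := by
    rw [← Finset.card_univ,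
      Finset.card_eq_sum_card_fiberwise (f := H.connectedComponentMk) (t := Finset.univ)
        (fun _ _ => Finset.mem_coe.2 (Finset.mem_univ _))]
    refine Finset.sum_congr rfl fun C _ => ?_
    rw [← Set.ncard_coe_finset]
    congr 1
    ext; simp
  simp only [Finset.sum_const, Finset.card_univ, smul_eq_mul, hn] at hsum
  set F : Finset (Sym2 V) := S.toFinset.biUnion fun v => G.incidenceFinset v with hF
  have hFcard : F.card ≤ S.ncard * k := by
    rw [Set.ncard_eq_toFinset_card']
    refine Finset.card_biUnion_le_card_mul _ _ _ fun v _ => ?_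
    rw [SimpleGraph.card_incidenceFinset_eq_degree]
    exact hdeg v
  have hHF : H = G.deleteEdges (F : Set (Sym2 V)) := by
    ext a b
    simp only [hH, isolate_adj, SimpleGraph.deleteEdges_adj, hF, Finset.mem_coe, Finset.mem_biUnion,
      Set.mem_toFinset, SimpleGraph.mem_incidenceFinset, SimpleGraph.mk'_mem_incidenceSet_iff]
    constructor
    · rintro ⟨h, ha, hb⟩
      refine ⟨h, ?_⟩
      rintro ⟨s, hs, -, rfl | rfl⟩
      · exact ha hs
      · exact hb hs
    · rintro ⟨h, hno⟩
      exact ⟨h, fun ha => hno ⟨a, ha, h, Or.inl rfl⟩, fun hb => hno ⟨b, hb, h, Or.inr rfl⟩⟩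
  have hc : Fintype.card H.ConnectedComponent ≤ Nat.card G.ConnectedComponent + F.card := by
    rw [← Nat.card_eq_fintype_card, hHF]
    exact card_components_deleteEdges G F
  have hm : G.edgeFinset.card ≤ H.edgeFinset.card + F.card := by
    refine le_trans (Finset.card_le_card fun e he => ?_) (Finset.card_union_le _ _)
    rw [Finset.mem_union, or_iff_not_imp_right]
    intro h
    rw [SimpleGraph.mem_edgeFinset] at he ⊢
    rw [hHF, SimpleGraph.edgeSet_deleteEdges]
    exact ⟨he, h⟩
  have e1 : k * G.edgeFinset.card ≤ k * (H.edgeFinset.card + F.card) := Nat.mul_le_mul_left k hm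
  have e2 : (k + 1) * F.card ≤ (k + 1) * (S.ncard * k) := Nat.mul_le_mul_left _ hFcard
  have e3 := Nat.mul_le_mul_left (k * (k + 1)) hS'
  nlinarith

theorem stmt_0 (k : ℕ) (hk3 : 3 ≤ k) (hkeven : Even k)
    {V : Type*} [Fintype V] (G : SimpleGraph V) [DecidableRel G.Adj]
    (hdeg : ∀ v, G.degree v ≤ k)
    (hnoreg : ∀ C : G.ConnectedComponent, ¬ ∀ v ∈ C.supp, G.degree v = k) :
    (1 / ((k : ℝ) * ((k : ℝ) + 1))) *
        ((Fintype.card V : ℝ) - (Nat.card G.ConnectedComponent : ℝ))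
      + (1 / ((k : ℝ) + 1)) * (G.edgeSet.ncard : ℝ)
      ≤ (matchingNumber G : ℝ) := by
  have h := main_nat k hk3 hkeven G hdeg hnoreg
  rw [← SimpleGraph.coe_edgeFinset, Set.ncard_coe_finset]
  have h' : (Fintype.card V : ℝ) + k * G.edgeFinset.card
      ≤ k * (k + 1) * matchingNumber G + Nat.card G.ConnectedComponent := by exact_mod_cast h
  have hk : (0 : ℝ) < k := by exact_mod_cast (by omega : 0 < k)
  have hk1 : (0 : ℝ) < k * (k + 1) := by positivity
  rw [show (1 / ((k : ℝ) * ((k : ℝ) + 1))) *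
        ((Fintype.card V : ℝ) - (Nat.card G.ConnectedComponent : ℝ))
      + (1 / ((k : ℝ) + 1)) * (G.edgeFinset.card : ℝ)
      = ((Fintype.card V : ℝ) - Nat.card G.ConnectedComponent + k * G.edgeFinset.card)
        / (k * (k + 1)) by field_simp, div_le_iff₀ hk1]
  linarith
end

section
/- Let k ≥ 3 be an odd integer and let G be a finite simple graph with c connected components, n vertices, m edges, and maximum degree at most k. If no connected component of G is a k-regular graph, then the matching number satisfies α'(G) ≥ ((k−1)/(k(k²−3)))·(n − c) + ((k²−k−2)/(k(k²−3)))·m. -/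
namespace MatchBound
open SimpleGraph

/-! ### The Tutte–Berge inequality -/

/-- The spanning subgraph of `G` in which every vertex of `S` has been made isolated. -/
def isolate {V : Type*} (G : SimpleGraph V) (S : Set V) : SimpleGraph V where
  Adj u v := G.Adj u v ∧ u ∉ S ∧ v ∉ S
  symm := ⟨fun _ _ h => ⟨h.1.symm, h.2.2, h.2.1⟩⟩
  loopless := ⟨fun _ h => h.1.ne rfl⟩

/-- The graph `G` together with `d` new vertices, each adjacent to every other vertex. -/
def extend {V : Type*} (G : SimpleGraph V) (d : ℕ) : SimpleGraph (V ⊕ Fin d) where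
  Adj x y := x ≠ y ∧ ∀ a b, x = Sum.inl a → y = Sum.inl b → G.Adj a b
  symm := ⟨fun _ _ h => ⟨h.1.symm, fun a b ha hb => (h.2 b a hb ha).symm⟩⟩
  loopless := ⟨fun _ h => h.1 rfl⟩

lemma isolate_le {V : Type*} (G : SimpleGraph V) (S : Set V) : isolate G S ≤ G :=
  fun _ _ h => h.1

lemma extend_adj_inl {V : Type*} {G : SimpleGraph V} {d : ℕ} {a b : V} :
    (extend G d).Adj (Sum.inl a) (Sum.inl b) ↔ G.Adj a b := by
  constructor
  · intro h
    exact h.2 a b rfl rfl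
  · intro h
    refine ⟨fun e => h.ne (Sum.inl_injective e), ?_⟩
    rintro a' b' h1 h2
    cases h1; cases h2; exact h

/-- Reachability in a closed induced copy of `A` inside `B` is reachability in `A`. -/
lemma reachable_of_closed {α β : Type*} {A : SimpleGraph α} {B : SimpleGraph β} (f : α → β)
    (hadj : ∀ x y, A.Adj x y ↔ B.Adj (f x) (f y))
    (hiso : ∀ b, b ∉ Set.range f → ∀ c, ¬ B.Adj b c) {a : α} {b : β}
    (h : B.Reachable (f a) b) : ∃ a', f a' = b ∧ A.Reachable a a' := by
  rw [reachable_iff_reflTransGen] at h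
  induction h with
  | refl => exact ⟨a, rfl, Reachable.refl a⟩
  | @tail b c _ hbc ih =>
    obtain ⟨a', rfl, ha'⟩ := ih
    have hc : c ∈ Set.range f := by
      by_contra hc
      exact hiso c hc _ hbc.symm
    obtain ⟨x, rfl⟩ := hc
    exact ⟨x, rfl, ha'.trans ((hadj _ _).2 hbc).reachable⟩

/-- If `B` consists of an induced copy of `A` and isolated vertices, then each isolated vertex
contributes an odd component in addition to those of `A`. -/
lemma ncard_odd_add_le {α β : Type*} [Finite β] {A : SimpleGraph α} {B : SimpleGraph β}
    (f : α → β) (hf : Function.Injective f)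
    (hadj : ∀ x y, A.Adj x y ↔ B.Adj (f x) (f y))
    (hiso : ∀ b, b ∉ Set.range f → ∀ c, ¬ B.Adj b c) :
    A.oddComponents.ncard + (Set.range f)ᶜ.ncard ≤ B.oddComponents.ncard := by
  classical
  let φ : A →g B := ⟨f, fun {x y} h => (hadj x y).1 h⟩
  have hsupp : ∀ C : A.ConnectedComponent, (C.map φ).supp = f '' C.supp := by
    intro C
    induction C using ConnectedComponent.ind with
    | _ v =>
    ext b
    simp only [ConnectedComponent.map_mk, ConnectedComponent.mem_supp_iff, Set.mem_image,
      ConnectedComponent.eq]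
    constructor
    · intro h
      obtain ⟨a', rfl, h'⟩ := reachable_of_closed f hadj hiso h.symm
      exact ⟨a', h'.symm, rfl⟩
    · rintro ⟨x, hx, rfl⟩
      exact hx.map φ
  have hsingle : ∀ b, b ∉ Set.range f → (B.connectedComponentMk b).supp = {b} := by
    intro b hb
    ext c
    simp only [ConnectedComponent.mem_supp_iff, ConnectedComponent.eq, Set.mem_singleton_iff]
    constructor
    · intro h
      have h := h.symm
      rw [reachable_iff_reflTransGen] at h
      rcases Relation.ReflTransGen.cases_head h with h | ⟨d, hd, _⟩
      · exact h.symm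
      · exact absurd hd (hiso b hb d)
    · rintro rfl; exact Reachable.refl _
  have h1 : (ConnectedComponent.map φ '' A.oddComponents).ncard = A.oddComponents.ncard := by
    apply Set.ncard_image_of_injective
    intro C D h
    rw [← ConnectedComponent.supp_inj] at h ⊢
    rw [hsupp, hsupp] at h
    exact hf.image_injective h
  have h2 : (B.connectedComponentMk '' (Set.range f)ᶜ).ncard = (Set.range f)ᶜ.ncard := by
    apply Set.InjOn.ncard_image
    intro b hb c hc h
    have := congrArg ConnectedComponent.supp h
    rw [hsingle b hb, hsingle c hc] at this
    exact Set.singleton_injective this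
  rw [← h1, ← h2, ← Set.ncard_union_eq _ (Set.toFinite _) (Set.toFinite _)]
  · apply Set.ncard_le_ncard _ (Set.toFinite _)
    rintro D (⟨C, hC, rfl⟩ | ⟨b, hb, rfl⟩)
    · simp only [Set.mem_ofPred_eq] at hC ⊢
      rw [hsupp, Set.ncard_image_of_injective _ hf]
      exact hC
    · simp only [Set.mem_ofPred_eq]
      rw [hsingle b hb]
      simp
  · rw [Set.disjoint_left]
    rintro D ⟨C, hC, rfl⟩ ⟨b, hb, h⟩
    have := congrArg ConnectedComponent.supp h
    rw [hsingle b hb, hsupp] at this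
    have hbC : b ∈ f '' C.supp := this ▸ rfl
    exact hb (Set.image_subset_range _ _ hbC)

/-- A matching with `e` edges covers at most `2 e` vertices. -/
lemma verts_ncard_le {V : Type*} [Finite V] {G : SimpleGraph V} {M : G.Subgraph}
    (hM : M.IsMatching) : M.verts.ncard ≤ 2 * M.edgeSet.ncard := by
  classical
  have := Fintype.ofFinite V
  have hfin : M.edgeSet.Finite := Set.toFinite _
  rw [hM.verts_eq_biUnion_edgeSet, Set.ncard_eq_toFinset_card M.edgeSet hfin]
  have : (⋃ e ∈ M.edgeSet, (e : Set V)) =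
      ((hfin.toFinset.biUnion fun e => e.toFinset : Finset V) : Set V) := by
    ext v; simp
  rw [this, Set.ncard_coe_finset, mul_comm]
  apply Finset.card_biUnion_le_card_mul
  intro e _
  rw [Sym2.card_toFinset]
  split_ifs <;> omega

lemma le_matchingNumber {V : Type*} [Finite V] {G : SimpleGraph V} {M : G.Subgraph}
    (hM : M.IsMatching) : M.edgeSet.ncard ≤ matchingNumber G := by
  apply le_csSup
  · refine ⟨Nat.card (Sym2 V), ?_⟩
    rintro n ⟨M, _, rfl⟩
    exact Set.ncard_le_card _
  · exact ⟨M, hM, rfl⟩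

/-- A perfect matching of the extension by `d` vertices loses at most `d` vertices of `G` when the
new vertices are removed. -/
lemma card_le_of_perfect {V : Type*} [Finite V] {G : SimpleGraph V} {d : ℕ}
    {P : (extend G d).Subgraph} (hP : P.IsPerfectMatching) :
    Nat.card V ≤ 2 * matchingNumber G + d := by
  classical
  have hP1 := Subgraph.isPerfectMatching_iff.1 hP
  let M : G.Subgraph :=
    { verts := {v | ∃ w, P.Adj (Sum.inl v) (Sum.inl w)}
      Adj := fun v w => P.Adj (Sum.inl v) (Sum.inl w)
      adj_sub := fun h => extend_adj_inl.1 (P.adj_sub h)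
      edge_vert := fun {v w} h => ⟨w, h⟩
      symm := ⟨fun _ _ h => h.symm⟩ }
  have hM : M.IsMatching := by
    rintro v ⟨w, hw⟩
    refine ⟨w, hw, fun y hy => ?_⟩
    exact Sum.inl_injective ((hP1 (Sum.inl v)).unique hy hw)
  have hc : M.vertsᶜ.ncard ≤ d := by
    have hcov : ∀ v : V, v ∈ M.vertsᶜ → ∃ i : Fin d, P.Adj (Sum.inl v) (Sum.inr i) := by
      intro v hv
      obtain ⟨w, hw, _⟩ := hP1 (Sum.inl v)
      rcases w with w | i
      · exact absurd ⟨w, hw⟩ hv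
      · exact ⟨i, hw⟩
    rcases Nat.eq_zero_or_pos d with rfl | hd
    · have : M.vertsᶜ = ∅ := by
        ext v
        simp only [Set.mem_empty_iff_false, iff_false]
        intro hv
        obtain ⟨i, _⟩ := hcov v hv
        exact i.elim0
      rw [this]; simp
    have : Nonempty (Fin d) := ⟨⟨0, hd⟩⟩
    choose! g hg using hcov
    have := Set.ncard_le_ncard_of_injOn (t := (Set.univ : Set (Fin d))) g (s := M.vertsᶜ)
      (fun _ _ => Set.mem_univ _) (by
        intro v hv w hw h
        have h1 := (hg v hv).symm
        have h2 := (hg w hw).symm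
        rw [← h] at h2
        exact Sum.inl_injective ((hP1 _).unique h1 h2))
    simpa using this
  have h1 := verts_ncard_le hM
  have h2 := le_matchingNumber hM
  have h3 := Set.ncard_add_ncard_compl M.verts
  omega

/-- The Tutte–Berge inequality `2 α' ≥ n + |S| - odd (G - S)` for some `S`. The vertices of `S` are
kept as isolated vertices here, hence count as odd components too. -/
lemma exists_berge {V : Type*} [Finite V] (G : SimpleGraph V) :
    ∃ S : Set V, Nat.card V + 2 * S.ncard ≤
      2 * matchingNumber G + (isolate G S).oddComponents.ncard := by
  classical
  -- `S` maximizes the deficiency `odd (G - S) - |S|`; adding that many universal vertices to `G`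
  -- leaves no Tutte violator.
  obtain ⟨S, hS⟩ := Finite.exists_max
    (fun S : Set V => ((isolate G S).oddComponents.ncard : ℤ) - 2 * S.ncard)
  refine ⟨S, ?_⟩
  have h0 := hS ∅
  simp only [Set.ncard_empty] at h0
  obtain ⟨d, hd⟩ : ∃ d : ℕ, (isolate G S).oddComponents.ncard = d + 2 * S.ncard :=
    ⟨_, (Nat.sub_add_cancel (by omega)).symm⟩
  have hpar : Even (Nat.card (V ⊕ Fin d)) := by
    have := odd_ncard_oddComponents (isolate G S)
    rw [Nat.card_sum, Nat.card_fin]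
    rw [hd] at this
    grind
  have hT : ∀ u, ¬ (extend G d).IsTutteViolator u := by
    intro U hU
    unfold IsTutteViolator at hU
    by_cases hall : ∀ i : Fin d, Sum.inr i ∈ U
    · have hex : ∀ x : ((⊤ : (extend G d).Subgraph).deleteVerts U).verts,
          ∃ v, x.1 = Sum.inl v := by
        rintro ⟨x | i, hx⟩
        · exact ⟨x, rfl⟩
        · simp [hall i] at hx
      choose f hf using hex
      have hmem : ∀ x, Sum.inl (f x) ∉ U := by
        intro x hx
        have := x.2
        rw [hf x] at this
        simp [hx] at this
      have hrange : Set.range f = (Sum.inl ⁻¹' U)ᶜ := by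
        ext v
        constructor
        · rintro ⟨x, rfl⟩
          exact hmem x
        · intro hv
          have hv' : (Sum.inl v : V ⊕ Fin d) ∈
              ((⊤ : (extend G d).Subgraph).deleteVerts U).verts := by simpa using hv
          exact ⟨⟨_, hv'⟩, (Sum.inl_injective (hf ⟨_, hv'⟩)).symm⟩
      have key := ncard_odd_add_le (A := ((⊤ : (extend G d).Subgraph).deleteVerts U).coe)
        (B := isolate G (Sum.inl ⁻¹' U)) f (by
          intro x y h
          apply Subtype.ext
          rw [hf x, hf y, h]) (by
          intro x y
          rw [Subgraph.coe_adj, Subgraph.deleteVerts_adj, hf x, hf y]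
          simp only [Subgraph.verts_top, Set.mem_univ, true_and, Subgraph.top_adj,
            extend_adj_inl]
          have := hmem x
          have := hmem y
          simp only [isolate, Set.mem_preimage]
          tauto) (by
          intro b hb c hbc
          rw [hrange] at hb
          exact hb hbc.2.1)
      rw [hrange, compl_compl] at key
      have hm := hS (Sum.inl ⁻¹' U)
      have hUc : (Sum.inl ⁻¹' U : Set V).ncard + d ≤ U.ncard := by
        have e1 : (Sum.inl '' (Sum.inl ⁻¹' U : Set V) : Set (V ⊕ Fin d)).ncard =
          (Sum.inl ⁻¹' U : Set V).ncard := Set.ncard_image_of_injective _ Sum.inl_injective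
        have e2 : (Set.range (Sum.inr : Fin d → V ⊕ Fin d)).ncard = d := by
          rw [← Set.image_univ, Set.ncard_image_of_injective _ Sum.inr_injective]
          simp
        refine le_trans (congrArg₂ (· + ·) e1.symm e2.symm).le ?_
        rw [← Set.ncard_union_eq _ (Set.toFinite _) (Set.toFinite _)]
        · apply Set.ncard_le_ncard _ (Set.toFinite _)
          rintro x (⟨v, hv, rfl⟩ | ⟨i, rfl⟩)
          · exact hv
          · exact hall i
        · rw [Set.disjoint_left]
          rintro x ⟨v, hv, rfl⟩ ⟨i, hi⟩
          cases hi
      omega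
    -- A surviving universal vertex makes the rest connected, so only `U = ∅` could violate, and
    -- this is excluded by parity.
    · push Not at hall
      obtain ⟨i, hi⟩ := hall
      have hi' : (Sum.inr i : V ⊕ Fin d) ∈
              ((⊤ : (extend G d).Subgraph).deleteVerts U).verts := by simpa using hi
      have hconn : ∀ x, ((⊤ : (extend G d).Subgraph).deleteVerts U).coe.Reachable ⟨_, hi'⟩ x := by
        intro x
        by_cases hx : ⟨_, hi'⟩ = x
        · rw [hx]
        · apply Adj.reachable
          rw [Subgraph.coe_adj, Subgraph.deleteVerts_adj]
          have hx2 := x.2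
          simp only [Subgraph.deleteVerts_verts, Subgraph.verts_top, Set.mem_sdiff,
            Set.mem_univ, true_and] at hx2
          refine ⟨Set.mem_univ _, hi, Set.mem_univ _, hx2, ?_⟩
          refine ⟨fun h => hx (Subtype.ext h), ?_⟩
          rintro a b h
          cases h
      have hsub : Subsingleton ((⊤ : (extend G d).Subgraph).deleteVerts U).coe.ConnectedComponent := by
        constructor
        intro C D
        induction C using ConnectedComponent.ind with
        | _ v =>
        induction D using ConnectedComponent.ind with
        | _ w =>
        exact ConnectedComponent.eq.2 ((hconn v).symm.trans (hconn w))
      have hle : ((⊤ : (extend G d).Subgraph).deleteVerts U).coe.oddComponents.ncard ≤ 1 :=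
        Set.ncard_le_one_of_subsingleton _
      have hU0 : U = ∅ := by
        rw [← Set.ncard_eq_zero (Set.toFinite _)]
        omega
      subst hU0
      have hone : ((⊤ : (extend G d).Subgraph).deleteVerts ∅).coe.oddComponents.ncard = 1 := by
        omega
      have hodd := (odd_ncard_oddComponents
        ((⊤ : (extend G d).Subgraph).deleteVerts ∅).coe).1 (by rw [hone]; exact odd_one)
      have hcard : Nat.card ((⊤ : (extend G d).Subgraph).deleteVerts ∅).verts =
          Nat.card (V ⊕ Fin d) := by
        rw [Nat.card_coe_set_eq]; simp
      rw [hcard] at hodd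
      exact (Nat.not_odd_iff_even.2 hpar) hodd
  have := Fintype.ofFinite (V ⊕ Fin d)
  obtain ⟨P, hP⟩ := tutte.2 hT
  have := card_le_of_perfect hP
  omega

/-! ### Counting components and edges -/

lemma reachable_sup_edge {V : Type*} {G : SimpleGraph V} {u v x y : V}
    (h : (G ⊔ edge u v).Reachable x y) :
    G.Reachable x y ∨
      ((G.Reachable x u ∨ G.Reachable x v) ∧ (G.Reachable y u ∨ G.Reachable y v)) := by
  rw [reachable_iff_reflTransGen] at h
  induction h with
  | refl => exact Or.inl (Reachable.refl x)
  | @tail b c _ hbc ih =>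
    rw [sup_adj, edge_adj] at hbc
    rcases hbc with hbc | ⟨⟨rfl, rfl⟩ | ⟨rfl, rfl⟩, _⟩
    · have hb := hbc.reachable
      rcases ih with h | ⟨h1, h2 | h2⟩
      · exact Or.inl (h.trans hb)
      · exact Or.inr ⟨h1, Or.inl (hb.symm.trans h2)⟩
      · exact Or.inr ⟨h1, Or.inr (hb.symm.trans h2)⟩
    · rcases ih with h | ⟨h1, _⟩
      · exact Or.inr ⟨Or.inl h, Or.inr (Reachable.refl _)⟩
      · exact Or.inr ⟨h1, Or.inr (Reachable.refl _)⟩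
    · rcases ih with h | ⟨h1, _⟩
      · exact Or.inr ⟨Or.inr h, Or.inl (Reachable.refl _)⟩
      · exact Or.inr ⟨h1, Or.inl (Reachable.refl _)⟩

lemma card_components_sup_edge {V : Type*} [Finite V] (G : SimpleGraph V) (u v : V) :
    Nat.card G.ConnectedComponent ≤ Nat.card (G ⊔ edge u v).ConnectedComponent + 1 := by
  classical
  have hinj : Set.InjOn (ConnectedComponent.map (Hom.ofLE (le_sup_left : G ≤ G ⊔ edge u v)))
      ({G.connectedComponentMk u}ᶜ) := by
    intro C hC D hD h
    induction C using ConnectedComponent.ind with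
    | _ x =>
    induction D using ConnectedComponent.ind with
    | _ y =>
    simp only [Set.mem_compl_iff, Set.mem_singleton_iff, ConnectedComponent.eq] at hC hD
    rw [ConnectedComponent.map_mk, ConnectedComponent.map_mk, ConnectedComponent.eq] at h
    rw [ConnectedComponent.eq]
    rcases reachable_sup_edge h with h | ⟨h1, h2⟩
    · exact h
    · exact (h1.resolve_left hC).trans (h2.resolve_left hD).symm
  have h1 := Set.ncard_le_ncard_of_injOn (t := Set.univ) _ (fun _ _ => Set.mem_univ _) hinj
  have h2 := Set.ncard_add_ncard_compl {G.connectedComponentMk u}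
  rw [Set.ncard_singleton] at h2
  rw [Set.ncard_univ] at h1
  omega

/-- Deleting edges one at a time creates at most one new component per edge. -/
lemma card_components_add_le {V : Type*} [Finite V] (G : SimpleGraph V) :
    ∀ (n : ℕ) (G' : SimpleGraph V), G' ≤ G → G'.edgeSet.ncard + n = G.edgeSet.ncard →
      Nat.card G'.ConnectedComponent ≤ Nat.card G.ConnectedComponent + n := by
  classical
  intro n
  induction n with
  | zero =>
    intro G' hle hn
    have : G'.edgeSet = G.edgeSet :=
      Set.eq_of_subset_of_ncard_le (edgeSet_mono hle) (by omega) (Set.toFinite _)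
    rw [edgeSet_inj.1 this]
    omega
  | succ n ih =>
    intro G' hle hn
    obtain ⟨e, he, he'⟩ : ∃ e ∈ G.edgeSet, e ∉ G'.edgeSet :=
      Set.exists_mem_notMem_of_ncard_lt_ncard (by omega) (Set.toFinite _)
    induction e using Sym2.ind with
    | _ u v =>
    rw [mem_edgeSet] at he he'
    have h1 := card_components_sup_edge G' u v
    have h2 := ih (G' ⊔ edge u v) (sup_le hle (by
      intro a b hab
      rw [edge_adj] at hab
      rcases hab with ⟨⟨rfl, rfl⟩ | ⟨rfl, rfl⟩, _⟩
      · exact he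
      · exact he.symm)) (by
      rw [edgeSet_sup, edgeSet_edge_of_ne he.ne, Set.union_singleton,
        Set.ncard_insert_of_notMem (a := s(u, v)) (s := G'.edgeSet) he' (Set.toFinite _)]
      omega)
    omega

/-- Isolating `S` removes at most `k` edges per vertex of `S`. -/
lemma edges_le {V : Type*} [Fintype V] (G : SimpleGraph V) [DecidableRel G.Adj] {k : ℕ}
    (hdeg : ∀ v, G.degree v ≤ k) (S : Set V) :
    G.edgeSet.ncard ≤ (isolate G S).edgeSet.ncard + k * S.ncard := by
  classical
  have hsub : G.edgeSet ⊆ (isolate G S).edgeSet ∪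
      ((S.toFinset.biUnion fun v => G.incidenceFinset v : Finset (Sym2 V)) : Set (Sym2 V)) := by
    intro e he
    induction e using Sym2.ind with
    | _ u v =>
    rw [mem_edgeSet] at he
    by_cases hu : u ∈ S
    · right
      simp only [Finset.coe_biUnion, Set.mem_iUnion]
      exact ⟨u, by simpa using hu, by simpa [mk'_mem_incidenceSet_iff] using he⟩
    by_cases hv : v ∈ S
    · right
      simp only [Finset.coe_biUnion, Set.mem_iUnion]
      exact ⟨v, by simpa using hv, by simpa [mk'_mem_incidenceSet_iff] using he⟩
    · left
      exact ⟨he, hu, hv⟩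
  refine (Set.ncard_le_ncard hsub (Set.toFinite _)).trans ((Set.ncard_union_le _ _).trans ?_)
  rw [Set.ncard_coe_finset, Set.ncard_eq_toFinset_card' S, mul_comm k]
  gcongr
  apply Finset.card_biUnion_le_card_mul
  intro v _
  rw [card_incidenceFinset_eq_degree]
  exact hdeg v

/-- If all vertices in a component of a subgraph keep the maximum possible degree `k`, that
component is already a component of the whole graph. -/
lemma regular_component {V : Type*} [Fintype V] {G G' : SimpleGraph V} [DecidableRel G.Adj]
    [DecidableRel G'.Adj] {k : ℕ} (hdeg : ∀ v, G.degree v ≤ k) (hle : G' ≤ G) {v : V}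
    (h : ∀ w, G'.Reachable v w → G'.degree w = k) {w : V} (hw : G.Reachable v w) :
    G'.Reachable v w := by
  rw [reachable_iff_reflTransGen] at hw
  induction hw with
  | refl => exact Reachable.refl v
  | @tail b c _ hbc ih =>
    have hsub : G'.neighborFinset b ⊆ G.neighborFinset b := by
      intro x hx
      rw [mem_neighborFinset] at hx ⊢
      exact hle hx
    have heq := Finset.eq_of_subset_of_card_le hsub (by
      rw [card_neighborFinset_eq_degree, card_neighborFinset_eq_degree, h b ih]
      exact hdeg b)
    have : c ∈ G'.neighborFinset b := by
      rw [heq, mem_neighborFinset]; exact hbc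
    rw [mem_neighborFinset] at this
    exact ih.trans this.reachable

/-- A component with `n` vertices and degree sum `D` satisfies its share of the bound. Odd
components with more than `k` vertices have at least `k + 2` of them, since `k` is odd. -/
lemma component_ineq {k n D : ℕ} (hk3 : 3 ≤ k) (hkodd : Odd k) (hn : 1 ≤ n)
    (h1 : D ≤ n * (n - 1)) (h2 : D + 1 ≤ k * n) :
    2 * ((k : ℝ) - 1) * ((n : ℝ) - 1) + ((k : ℝ) ^ 2 - k - 2) * D ≤
      k * ((k : ℝ) ^ 2 - 3) * ((n : ℝ) - if Odd n then 1 else 0) := by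
  have hk : (3 : ℝ) ≤ k := by exact_mod_cast hk3
  have hn' : (1 : ℝ) ≤ n := by exact_mod_cast hn
  have h1' : (D : ℝ) ≤ n * (n - 1) := by
    have : (D : ℝ) ≤ ((n * (n - 1) : ℕ) : ℝ) := by exact_mod_cast h1
    rwa [Nat.cast_mul, Nat.cast_sub hn, Nat.cast_one] at this
  have h2' : (D : ℝ) + 1 ≤ k * n := by exact_mod_cast h2
  have hb : 0 ≤ (k : ℝ) ^ 2 - k - 2 := by nlinarith
  have ha : 0 ≤ ((k : ℝ) - 1) * (k - 2) := by nlinarith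
  split_ifs with ho
  · by_cases hnk : n ≤ k
    · have hnk' : (n : ℝ) ≤ k := by exact_mod_cast hnk
      have e1 := mul_le_mul_of_nonneg_left h1' hb
      have e2 : ((k : ℝ) ^ 2 - k - 2) * n ≤ ((k : ℝ) ^ 2 - k - 2) * k :=
        mul_le_mul_of_nonneg_left hnk' hb
      have e3 : 0 ≤ ((n : ℝ) - 1) *
          (k * ((k : ℝ) ^ 2 - 3) - 2 * (k - 1) - ((k : ℝ) ^ 2 - k - 2) * n) := by
        apply mul_nonneg (by linarith)
        nlinarith
      nlinarith
    · have hnk2 : k + 2 ≤ n := by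
        obtain ⟨a, ha⟩ := ho
        obtain ⟨b, hb⟩ := hkodd
        omega
      have hnk' : (k : ℝ) + 2 ≤ n := by exact_mod_cast hnk2
      have e1 := mul_le_mul_of_nonneg_left h2' hb
      have e2 := mul_le_mul_of_nonneg_left hnk' ha
      nlinarith
  · have e1 := mul_le_mul_of_nonneg_left h2' hb
    have e2 := mul_le_mul_of_nonneg_left hn' ha
    nlinarith

/-- The bound on `n - odd` for a spanning subgraph `G'` of `G`, obtained by summing `component_ineq`
over the components of `G'`. No component of `G'` has degree sum `k` times its order, because it
would be a `k`-regular component of `G`. -/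
lemma sum_components {V : Type*} [Fintype V] {G G' : SimpleGraph V} [DecidableRel G.Adj]
    {k : ℕ} (hk3 : 3 ≤ k) (hkodd : Odd k) (hdeg : ∀ v, G.degree v ≤ k)
    (hnoreg : ∀ C : G.ConnectedComponent, ¬ ∀ v ∈ C.supp, G.degree v = k) (hle : G' ≤ G) :
    2 * ((k : ℝ) - 1) * ((Fintype.card V : ℝ) - Nat.card G'.ConnectedComponent) +
      ((k : ℝ) ^ 2 - k - 2) * (2 * G'.edgeSet.ncard) ≤
      k * ((k : ℝ) ^ 2 - 3) * ((Fintype.card V : ℝ) - G'.oddComponents.ncard) := by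
  classical
  have hfC : Fintype G'.ConnectedComponent := Fintype.ofFinite _
  let F : G'.ConnectedComponent → Finset V := fun C =>
    Finset.univ.filter fun v => G'.connectedComponentMk v = C
  have hV : (Fintype.card V : ℝ) = ∑ C, ((F C).card : ℝ) := by
    rw [← Finset.card_univ, Finset.card_eq_sum_card_fiberwise
      (f := G'.connectedComponentMk) (t := Finset.univ) (fun _ _ => Finset.mem_univ _)]
    push_cast
    rfl
  have hE : (2 * G'.edgeSet.ncard : ℝ) = ∑ C, ((∑ v ∈ F C, G'.degree v : ℕ) : ℝ) := by
    rw [← Nat.cast_sum, Finset.sum_fiberwise Finset.univ G'.connectedComponentMk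
      (fun v => G'.degree v), sum_degrees_eq_twice_card_edges, ← coe_edgeFinset,
      Set.ncard_coe_finset]
    push_cast
    rfl
  have hsupp : ∀ C : G'.ConnectedComponent, C.supp.ncard = (F C).card := by
    intro C
    rw [← Set.ncard_coe_finset]
    congr 1
    ext v
    simp [F]
  have hO : (G'.oddComponents.ncard : ℝ) = ∑ C, (if Odd (F C).card then (1 : ℝ) else 0) := by
    rw [Finset.sum_boole, ← Set.ncard_coe_finset]
    congr 2
    ext C
    simp [hsupp]
  have hc : (Nat.card G'.ConnectedComponent : ℝ) = ∑ _C : G'.ConnectedComponent, (1 : ℝ) := by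
    simp
  rw [hV, hE, hO, hc, ← Finset.sum_sub_distrib, ← Finset.sum_sub_distrib, Finset.mul_sum,
    Finset.mul_sum, Finset.mul_sum, ← Finset.sum_add_distrib]
  apply Finset.sum_le_sum
  intro C _
  induction C using ConnectedComponent.ind with
  | _ u =>
  have hmem : ∀ v, v ∈ F (G'.connectedComponentMk u) ↔ G'.Reachable u v := by
    intro v
    simp only [F, Finset.mem_filter, Finset.mem_univ, true_and, ConnectedComponent.eq]
    exact ⟨Reachable.symm, Reachable.symm⟩
  have hd : ∀ v, G'.degree v ≤ k := fun v => (degree_le_of_le hle).trans (hdeg v)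
  apply component_ineq hk3 hkodd
  · exact Finset.card_pos.2 ⟨u, (hmem u).2 (Reachable.refl u)⟩
  · rw [← smul_eq_mul]
    apply Finset.sum_le_card_nsmul
    intro v hv
    rw [← Finset.card_erase_of_mem hv, ← card_neighborFinset_eq_degree]
    apply Finset.card_le_card
    intro w hw
    rw [mem_neighborFinset] at hw
    exact Finset.mem_erase.2 ⟨hw.ne', (hmem w).2 (((hmem v).1 hv).trans hw.reachable)⟩
  · rw [Nat.add_one_le_iff, mul_comm, ← smul_eq_mul, ← Finset.sum_const]
    apply Finset.sum_lt_sum (fun v _ => hd v)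
    by_contra! hcon
    have hreg : ∀ w, G'.Reachable u w → G'.degree w = k := fun w hw =>
      le_antisymm (hd w) (hcon w ((hmem w).2 hw))
    apply hnoreg (G.connectedComponentMk u)
    intro v hv
    rw [ConnectedComponent.mem_supp_iff, ConnectedComponent.eq] at hv
    have := hreg v (regular_component hdeg hle hreg hv.symm)
    exact le_antisymm (hdeg v) (this ▸ degree_le_of_le hle)

end MatchBound

theorem stmt_1 (k : ℕ) (hk3 : 3 ≤ k) (hkodd : Odd k)
    {V : Type*} [Fintype V] (G : SimpleGraph V) [DecidableRel G.Adj]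
    (hdeg : ∀ v, G.degree v ≤ k)
    (hnoreg : ∀ C : G.ConnectedComponent, ¬ ∀ v ∈ C.supp, G.degree v = k) :
    (((k : ℝ) - 1) / ((k : ℝ) * ((k : ℝ) ^ 2 - 3))) *
        ((Fintype.card V : ℝ) - (Nat.card G.ConnectedComponent : ℝ))
      + (((k : ℝ) ^ 2 - (k : ℝ) - 2) / ((k : ℝ) * ((k : ℝ) ^ 2 - 3))) * (G.edgeSet.ncard : ℝ)
      ≤ (matchingNumber G : ℝ) := by
  obtain ⟨S, hS⟩ := MatchBound.exists_berge G
  have hle := MatchBound.isolate_le G S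
  obtain ⟨t, ht⟩ := Nat.exists_eq_add_of_le
    (Set.ncard_le_ncard (SimpleGraph.edgeSet_mono hle) (Set.toFinite _))
  have hcomp := MatchBound.card_components_add_le G t _ hle ht.symm
  have hedge := MatchBound.edges_le G hdeg S
  have hsum := MatchBound.sum_components hk3 hkodd hdeg hnoreg hle
  have htS : t ≤ k * S.ncard := by omega
  rw [Nat.card_eq_fintype_card] at hS
  have hk : (3 : ℝ) ≤ k := by exact_mod_cast hk3
  have hS' : (Fintype.card V : ℝ) + 2 * S.ncard ≤
      2 * matchingNumber G + (MatchBound.isolate G S).oddComponents.ncard := by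
    exact_mod_cast hS
  have hcomp' : (Nat.card (MatchBound.isolate G S).ConnectedComponent : ℝ) ≤
      Nat.card G.ConnectedComponent + t := by exact_mod_cast hcomp
  have ht' : (G.edgeSet.ncard : ℝ) = (MatchBound.isolate G S).edgeSet.ncard + t := by
    exact_mod_cast ht
  have htS' : (t : ℝ) ≤ k * S.ncard := by exact_mod_cast htS
  have hq : 0 < (k : ℝ) ^ 2 - 3 := by nlinarith
  have hpos : 0 < (k : ℝ) * ((k : ℝ) ^ 2 - 3) := by positivity
  rw [div_mul_eq_mul_div, div_mul_eq_mul_div, ← add_div, div_le_iff₀ hpos, ht']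
  have e1 := mul_le_mul_of_nonneg_left hcomp' (by linarith : 0 ≤ 2 * ((k : ℝ) - 1))
  have e2 := mul_le_mul_of_nonneg_left hS' hpos.le
  -- The two coefficients add up to `1 / k`, so the removed edges are paid for by `S` exactly.
  have e3 := mul_le_mul_of_nonneg_left htS' hq.le
  linarith
end

section
/- If k ≥ 3 is an odd integer and G is a finite connected simple graph with n vertices, m edges, and maximum degree at most k, then the matching number satisfies α'(G) ≥ ((k−1)/(k(k²−3)))·n + ((k²−k−2)/(k(k²−3)))·m − (k−1)/(k(k²−3)). -/
namespace MatchingBound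

open SimpleGraph

/-! ### Edges inside components and edges meeting a vertex set -/

/-- The spanning subgraph of `G` whose edges are the edges of `G` with both ends in `A`. The
vertices outside `A` are kept, as isolated vertices. -/
def restr {V : Type*} (G : SimpleGraph V) (A : Set V) : SimpleGraph V where
  Adj u v := G.Adj u v ∧ u ∈ A ∧ v ∈ A
  symm.symm _ _ h := ⟨h.1.symm, h.2.2, h.2.1⟩
  loopless.irrefl v h := G.loopless.irrefl v h.1

lemma two_mul_ncard_edgeSet {V : Type*} [Fintype V] (H : SimpleGraph V) [DecidableRel H.Adj] :
    2 * H.edgeSet.ncard = ∑ v, H.degree v := by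
  rw [sum_degrees_eq_twice_card_edges, ← coe_edgeFinset, Set.ncard_coe_finset]

lemma two_mul_ncard_restr_le {V : Type*} [Fintype V] (G : SimpleGraph V) (A : Set V) (d : ℕ)
    (h : ∀ v ∈ A, ((restr G A).neighborSet v).ncard ≤ d) :
    2 * (restr G A).edgeSet.ncard ≤ A.ncard * d := by
  classical
  rw [two_mul_ncard_edgeSet]
  have h0 : ∀ v, (restr G A).degree v ≤ if v ∈ A then d else 0 := by
    intro v
    split_ifs with hv
    · rw [← card_neighborSet_eq_degree, ← Nat.card_eq_fintype_card, Nat.card_coe_set_eq]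
      exact h v hv
    · rw [Nat.le_zero, SimpleGraph.degree, Finset.card_eq_zero, Finset.eq_empty_iff_forall_notMem]
      intro w hw
      exact hv ((mem_neighborFinset _ _ _).1 hw).2.1
  refine (Finset.sum_le_sum fun v _ => h0 v).trans ?_
  rw [Finset.sum_ite, Finset.sum_const_zero, add_zero, Finset.sum_const, smul_eq_mul,
    ← Set.ncard_coe_finset]
  simp

lemma two_mul_ncard_restr_le_maxDegree {V : Type*} [Fintype V] (G : SimpleGraph V)
    [DecidableRel G.Adj] (A : Set V) {k : ℕ} (hdeg : ∀ v, G.degree v ≤ k) :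
    2 * (restr G A).edgeSet.ncard ≤ A.ncard * k := by
  classical
  refine two_mul_ncard_restr_le G A k fun v _ => ?_
  refine le_trans ?_ (hdeg v)
  rw [← card_neighborSet_eq_degree, ← Nat.card_eq_fintype_card, Nat.card_coe_set_eq]
  exact Set.ncard_le_ncard (fun w hw => hw.1)

lemma two_mul_ncard_restr_le_complete {V : Type*} [Fintype V] (G : SimpleGraph V) (A : Set V) :
    2 * (restr G A).edgeSet.ncard ≤ A.ncard * (A.ncard - 1) := by
  refine two_mul_ncard_restr_le G A _ fun v hv => ?_
  rw [← Set.ncard_sdiff_singleton_of_mem hv]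
  exact Set.ncard_le_ncard (fun w hw => ⟨hw.2.2, fun h => hw.1.ne h.symm⟩)

/-- Bound for a component of order `n` with `m` edges, in terms of the parity of `n`. Equality holds
when `n = k + 2` and `2 * m = n * k - 1`, and when `n = 1`. -/
lemma component_bound {k n m : ℕ} (hk : 3 ≤ k) (hkodd : Odd k) (hn : 1 ≤ n)
    (h1 : 2 * m ≤ n * (n - 1)) (h2 : 2 * m ≤ n * k) :
    2 * ((k : ℝ) - 1) * ((n : ℝ) - 1) + 2 * ((k : ℝ) ^ 2 - k - 2) * m
      ≤ (k : ℝ) * ((k : ℝ) ^ 2 - 3) * (n - if Odd n then 1 else 0) := by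
  have hk' : (3 : ℝ) ≤ k := by exact_mod_cast hk
  have hn' : (1 : ℝ) ≤ n := by exact_mod_cast hn
  have hB : 0 ≤ (k : ℝ) ^ 2 - k - 2 := by nlinarith
  have h2' : 2 * (m : ℝ) ≤ n * k := by exact_mod_cast h2
  have h1' : 2 * (m : ℝ) ≤ n * (n - 1) := by
    have : ((2 * m : ℕ) : ℝ) ≤ ((n * (n - 1) : ℕ) : ℝ) := by exact_mod_cast h1
    rw [Nat.cast_mul, Nat.cast_mul, Nat.cast_sub hn] at this
    simpa using this
  -- `k * (k ^ 2 - 3) - 2 * (k - 1) - k * (k ^ 2 - k - 2) = (k - 1) * (k - 2)`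
  have hslack : 0 ≤ ((k : ℝ) - 1) * (k - 2) := by nlinarith
  split_ifs with hodd
  · rcases le_or_gt n k with hnk | hnk
    · have hnk' : (n : ℝ) ≤ k := by exact_mod_cast hnk
      have e1 := mul_le_mul_of_nonneg_left h1' hB
      have e2 := mul_nonneg (sub_nonneg.2 hn') (mul_nonneg hB (sub_nonneg.2 hnk'))
      have e3 := mul_nonneg (sub_nonneg.2 hn') hslack
      nlinarith
    · obtain ⟨a, ha⟩ := hodd
      obtain ⟨b, hb⟩ := hkodd
      have hnk' : (k : ℝ) + 2 ≤ n := by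
        have : k + 2 ≤ n := by omega
        exact_mod_cast this
      -- `n * k` is odd
      have h3 : 2 * m + 1 ≤ n * k := by
        have : n * k = 2 * (2 * a * b + a + b) + 1 := by subst ha hb; ring
        omega
      have h3' : 2 * (m : ℝ) + 1 ≤ n * k := by exact_mod_cast h3
      have e1 := mul_le_mul_of_nonneg_left h3' hB
      have e2 := mul_nonneg hslack (sub_nonneg.2 hnk')
      nlinarith
  · have e1 := mul_le_mul_of_nonneg_left h2' hB
    have e2 := mul_nonneg hslack (zero_le_one.trans hn')
    nlinarith

/-- Contracting the components of `restr G Sᶜ` leaves a connected graph, all of whose edges come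
from edges of `G` that meet `S`. -/
lemma card_component_le {V : Type*} [Fintype V] (G : SimpleGraph V) (hconn : G.Connected)
    (S : Set V) :
    Nat.card (restr G Sᶜ).ConnectedComponent ≤
      (G.edgeSet \ (restr G Sᶜ).edgeSet).ncard + 1 := by
  classical
  set H := restr G Sᶜ
  set Q := G.map H.connectedComponentMk
  have hQ : Q.Connected := by
    have : Nonempty V := hconn.nonempty
    have : Nonempty H.ConnectedComponent := this.map H.connectedComponentMk
    refine ⟨fun c d => ?_⟩
    induction c using ConnectedComponent.ind with | _ u
    induction d using ConnectedComponent.ind with | _ v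
    obtain ⟨p⟩ := hconn.preconnected u v
    induction p with
    | nil => exact Reachable.refl _
    | @cons a b c hab _ ih =>
      refine Reachable.trans ?_ ih
      by_cases he : H.connectedComponentMk a = H.connectedComponentMk b
      · rw [he]
      · exact Adj.reachable ⟨he, a, b, hab, rfl, rfl⟩
  refine hQ.card_vert_le_card_edgeSet_add_one.trans (Nat.add_le_add_right ?_ 1)
  have hsub : Q.edgeSet ⊆ Sym2.map H.connectedComponentMk '' (G.edgeSet \ H.edgeSet) := by
    intro e he
    induction e using Sym2.ind with | _ c d
    obtain ⟨hne, u, v, huv, rfl, rfl⟩ := he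
    exact ⟨s(u, v), ⟨huv, fun h => hne (ConnectedComponent.sound (Adj.reachable h))⟩, rfl⟩
  exact (Set.ncard_le_ncard hsub (Set.toFinite _)).trans (Set.ncard_image_le (Set.toFinite _))

lemma ncard_edges_meeting_le {V : Type*} [Fintype V] (G : SimpleGraph V)
    [DecidableRel G.Adj] (S : Set V) {k : ℕ} (hdeg : ∀ v, G.degree v ≤ k) :
    (G.edgeSet \ (restr G Sᶜ).edgeSet).ncard ≤ S.ncard * k := by
  classical
  have hsub : G.edgeSet \ (restr G Sᶜ).edgeSet ⊆
      (S.toFinset.biUnion fun v => G.incidenceFinset v : Finset (Sym2 V)) := by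
    rintro e ⟨he, hn⟩
    induction e using Sym2.ind with | _ u v
    simp only [Finset.coe_biUnion, Set.mem_iUnion, Finset.mem_coe, Set.mem_toFinset,
      mem_incidenceFinset]
    by_contra! hc
    refine hn ⟨he, fun hu => hc u hu ?_, fun hv => hc v hv ?_⟩
    · exact ⟨he, Sym2.mem_mk_left _ _⟩
    · exact ⟨he, Sym2.mem_mk_right _ _⟩
  refine (Set.ncard_le_ncard hsub (Set.toFinite _)).trans ?_
  rw [Set.ncard_coe_finset, Set.ncard_eq_toFinset_card']
  refine Finset.card_biUnion_le_card_mul _ _ _ fun v _ => ?_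
  rw [card_incidenceFinset_eq_degree]
  exact hdeg v

/-- Every edge of `G` either meets `S` or lies inside a component of `restr G Sᶜ`. -/
lemma ncard_edgeSet_le_sum {V : Type*} [Fintype V] (G : SimpleGraph V) (S : Set V)
    [Fintype (restr G Sᶜ).ConnectedComponent] :
    G.edgeSet.ncard ≤ (G.edgeSet \ (restr G Sᶜ).edgeSet).ncard +
      ∑ c : (restr G Sᶜ).ConnectedComponent, (restr G c.supp).edgeSet.ncard := by
  classical
  have hsub : G.edgeSet ⊆ (G.edgeSet \ (restr G Sᶜ).edgeSet) ∪
      ⋃ c : (restr G Sᶜ).ConnectedComponent, (restr G c.supp).edgeSet := by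
    intro e he
    by_cases h : e ∈ (restr G Sᶜ).edgeSet
    · right
      induction e using Sym2.ind with | _ u v
      refine Set.mem_iUnion.2 ⟨(restr G Sᶜ).connectedComponentMk u, he, rfl, ?_⟩
      exact ConnectedComponent.sound (Adj.reachable h).symm
    · exact Or.inl ⟨he, h⟩
  refine (Set.ncard_le_ncard hsub (Set.toFinite _)).trans
    ((Set.ncard_union_le _ _).trans (Nat.add_le_add_left ?_ _))
  exact Set.ncard_iUnion_le_of_fintype _

lemma sum_ncard_supp {V : Type*} [Fintype V] (H : SimpleGraph V) [Fintype H.ConnectedComponent] :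
    ∑ c : H.ConnectedComponent, c.supp.ncard = Fintype.card V := by
  classical
  rw [← Finset.card_univ, Finset.card_eq_sum_card_fiberwise (f := H.connectedComponentMk)
    (t := Finset.univ) (fun _ _ => Finset.mem_coe.2 (Finset.mem_univ _))]
  refine Finset.sum_congr rfl fun c _ => ?_
  rw [← Set.ncard_coe_finset]
  congr 1
  ext v
  simp

/-! ### The Tutte–Berge formula -/

/-- The join of `G` with a complete graph on `d` new vertices. -/
def cone {V : Type*} (G : SimpleGraph V) (d : ℕ) : SimpleGraph (V ⊕ Fin d) where
  Adj x y := x ≠ y ∧ ∀ u v, x = Sum.inl u → y = Sum.inl v → G.Adj u v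
  symm.symm _ _ h := ⟨h.1.symm, fun u v hu hv => (h.2 v u hv hu).symm⟩
  loopless.irrefl _ h := h.1 rfl

lemma cone_adj_inl {V : Type*} {G : SimpleGraph V} {d : ℕ} {u v : V} :
    (cone G d).Adj (Sum.inl u) (Sum.inl v) ↔ G.Adj u v :=
  ⟨fun h => h.2 u v rfl rfl, fun h => ⟨fun e => h.ne (Sum.inl_injective e), by
    rintro _ _ e1 e2
    rwa [← Sum.inl_injective e1, ← Sum.inl_injective e2]⟩⟩

lemma cone_adj_inr {V : Type*} {G : SimpleGraph V} {d : ℕ} {i : Fin d} {x : V ⊕ Fin d}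
    (h : Sum.inr i ≠ x) : (cone G d).Adj (Sum.inr i) x :=
  ⟨h, fun _ _ e => by simp at e⟩

/-- Handshaking: every vertex of a matching has degree one in it. -/
lemma ncard_verts_of_isMatching {V : Type*} [Fintype V] {G : SimpleGraph V} {M : G.Subgraph}
    (hM : M.IsMatching) : M.verts.ncard = 2 * M.edgeSet.ncard := by
  classical
  rw [← Subgraph.edgeSet_spanningCoe, two_mul_ncard_edgeSet, Set.ncard_eq_toFinset_card',
    Finset.card_eq_sum_ones, ← Finset.sum_subset (Finset.subset_univ M.verts.toFinset)]
  · refine Finset.sum_congr rfl fun v hv => ?_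
    rw [Subgraph.degree_spanningCoe]
    exact ((Subgraph.isMatching_iff_forall_degree.1 hM) v (Set.mem_toFinset.1 hv)).symm
  · intro v _ hv
    rw [SimpleGraph.degree, Finset.card_eq_zero, Finset.eq_empty_iff_forall_notMem]
    intro w hw
    exact hv (Set.mem_toFinset.2 (M.edge_vert ((mem_neighborFinset _ _ _).1 hw)))

lemma ncard_edgeSet_le_matchingNumber {V : Type*} [Fintype V] {G : SimpleGraph V}
    {M : G.Subgraph} (hM : M.IsMatching) : M.edgeSet.ncard ≤ matchingNumber G := by
  refine le_csSup ⟨G.edgeSet.ncard, ?_⟩ ⟨M, hM, rfl⟩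
  rintro _ ⟨M', _, rfl⟩
  exact Set.ncard_le_ncard M'.edgeSet_subset (Set.toFinite _)

/-- Deleting the `d` new vertices from a perfect matching of `cone G d` leaves a matching of `G`
that misses at most `d` vertices. -/
lemma card_le_of_isPerfectMatching {V : Type*} [Fintype V] {G : SimpleGraph V} {d : ℕ}
    {M : (cone G d).Subgraph} (hM : M.IsPerfectMatching) :
    Fintype.card V ≤ 2 * matchingNumber G + d := by
  classical
  let N : G.Subgraph :=
    { verts := {v | ∃ w, M.Adj (Sum.inl v) (Sum.inl w)}
      Adj := fun u v => M.Adj (Sum.inl u) (Sum.inl v)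
      adj_sub := fun h => cone_adj_inl.1 (M.adj_sub h)
      edge_vert := fun h => ⟨_, h⟩
      symm := ⟨fun _ _ h => M.symm.symm _ _ h⟩ }
  have hN : N.IsMatching := by
    rintro v ⟨w, hw⟩
    exact ⟨w, hw, fun x hx => Sum.inl_injective (hM.1.eq_of_adj_left hx hw)⟩
  have h1 : N.vertsᶜ.ncard ≤ d := by
    have hex : ∀ v : (N.vertsᶜ : Set V), ∃ i : Fin d, M.Adj (Sum.inl v.1) (Sum.inr i) := by
      rintro ⟨v, hv⟩
      obtain ⟨x, hx, _⟩ := hM.1 (hM.2 (Sum.inl v))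
      cases x with
      | inl w => exact absurd ⟨w, hx⟩ hv
      | inr i => exact ⟨i, hx⟩
    choose f hf using hex
    have hinj : Function.Injective f := by
      intro v w hvw
      have hw := hf w
      rw [← hvw] at hw
      exact Subtype.ext (Sum.inl_injective (hM.1.eq_of_adj_right (hf v) hw))
    have := Nat.card_le_card_of_injective f hinj
    rwa [Nat.card_coe_set_eq, Nat.card_fin] at this
  have h2 := Set.ncard_add_ncard_compl N.verts
  rw [Nat.card_eq_fintype_card] at h2
  have h3 := ncard_verts_of_isMatching hN
  have h4 := ncard_edgeSet_le_matchingNumber hN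
  omega

/-- The odd components of `cone G d` minus a set `u` containing all new vertices are the odd
components of `G` minus `S`, where `S` is the trace of `u` on `V`. As odd components of
`restr G Sᶜ` they are joined by the singletons of `S`. -/
lemma ncard_add_ncard_oddComponents_le {V : Type*} [Fintype V] {G : SimpleGraph V} {d : ℕ}
    {u : Set (V ⊕ Fin d)} (hu : ∀ i, Sum.inr i ∈ u) :
    (Sum.inl ⁻¹' u).ncard + ((⊤ : (cone G d).Subgraph).deleteVerts u).coe.oddComponents.ncard ≤
      (restr G (Sum.inl ⁻¹' u)ᶜ).oddComponents.ncard := by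
  classical
  set S : Set V := Sum.inl ⁻¹' u with hS
  set K := ((⊤ : (cone G d).Subgraph).deleteVerts u) with hK
  set H := restr G Sᶜ with hH
  have hex : ∀ x : K.verts, ∃ v, x.1 = Sum.inl v := by
    rintro ⟨x, hx⟩
    cases x with
    | inl v => exact ⟨v, rfl⟩
    | inr i => exact absurd (hu i) hx.2
  choose f hf using hex
  have hfS : ∀ x, f x ∉ S := fun x hx => x.2.2 (by rw [hf x]; exact hx)
  have hfinj : Function.Injective f := fun x y hxy =>
    Subtype.ext (by rw [hf x, hf y, hxy])
  have hfsurj : ∀ v, v ∉ S → ∃ x, f x = v := fun v hv =>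
    ⟨⟨Sum.inl v, trivial, hv⟩, (Sum.inl_injective (hf ⟨Sum.inl v, trivial, hv⟩)).symm⟩
  have hadj : ∀ x y, H.Adj (f x) (f y) ↔ K.coe.Adj x y := by
    intro x y
    have : K.coe.Adj x y ↔ (cone G d).Adj x.1 y.1 := by
      rw [Subgraph.coe_adj]
      exact Subgraph.deleteVerts_adj.trans
        ⟨fun h => h.2.2.2.2, fun h => ⟨trivial, x.2.2, trivial, y.2.2, h⟩⟩
    rw [this, hf x, hf y, cone_adj_inl]
    exact ⟨fun h => h.1, fun h => ⟨h, hfS x, hfS y⟩⟩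
  let φ : K.coe →g H := ⟨f, fun h => (hadj _ _).2 h⟩
  -- reachability lifts back along `f`, whose range is closed under adjacency in `H`
  have hreach : ∀ x w, H.Reachable (f x) w → ∃ y, f y = w ∧ K.coe.Reachable x y := by
    rintro x w ⟨p⟩
    generalize hv : f x = v at p
    induction p generalizing x with
    | nil => exact ⟨x, hv, Reachable.refl _⟩
    | @cons a b c hab _ ih =>
      obtain ⟨y, rfl⟩ := hfsurj b hab.2.2
      obtain ⟨z, hz, hyz⟩ := ih y rfl
      subst hv
      exact ⟨z, hz, (Adj.reachable ((hadj _ _).1 hab)).trans hyz⟩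
  have hsupp : ∀ c : K.coe.ConnectedComponent, (c.map φ).supp = f '' c.supp := by
    intro c
    induction c using ConnectedComponent.ind with | _ x
    ext w
    constructor
    · intro hw
      obtain ⟨y, hy, hxy⟩ := hreach x w (ConnectedComponent.exact hw).symm
      exact ⟨y, ConnectedComponent.sound hxy.symm, hy⟩
    · rintro ⟨y, hy, rfl⟩
      exact ConnectedComponent.sound ((ConnectedComponent.exact hy).map φ)
  have hsing : ∀ s ∈ S, (H.connectedComponentMk s).supp = {s} := by
    intro s hs
    ext w
    constructor
    · intro hw
      obtain ⟨p⟩ := (ConnectedComponent.exact hw).symm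
      cases p with
      | nil => rfl
      | cons h _ => exact absurd hs h.2.1
    · rintro rfl
      rfl
  have h1 : (H.connectedComponentMk '' S).ncard = S.ncard := by
    refine Set.InjOn.ncard_image fun s hs t ht hst => ?_
    have := hsing s hs
    rw [hst, hsing t ht] at this
    exact (Set.singleton_injective this).symm
  have h2 : (ConnectedComponent.map φ '' K.coe.oddComponents).ncard =
      K.coe.oddComponents.ncard := by
    refine Set.ncard_image_of_injective _ fun c c' hcc => ?_
    have := hsupp c
    rw [hcc, hsupp c'] at this
    exact ConnectedComponent.supp_injective (Set.image_injective.2 hfinj this).symm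
  rw [← h1, ← h2, ← Set.ncard_union_eq]
  · refine Set.ncard_le_ncard (Set.union_subset ?_ ?_) (Set.toFinite _)
    · rintro _ ⟨s, hs, rfl⟩
      rw [Set.mem_ofPred_eq, hsing s hs, Set.ncard_singleton]
      exact odd_one
    · rintro _ ⟨c, hc, rfl⟩
      rw [Set.mem_ofPred_eq, hsupp c, Set.ncard_image_of_injective _ hfinj]
      exact hc
  · rw [Set.disjoint_left]
    rintro _ ⟨s, hs, rfl⟩ ⟨c, _, hc⟩
    have h3 := hsupp c
    rw [hc, hsing s hs] at h3
    obtain ⟨x, _, hx⟩ := h3.subset (Set.mem_singleton s)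
    exact hfS x (hx ▸ hs)

/-- The nontrivial inequality of the **Tutte–Berge formula**. The vertices of `S` are singleton
components of `restr G Sᶜ`, which accounts for the coefficient `2` of `S.ncard`. -/
lemma tutte_berge {V : Type*} [Fintype V] (G : SimpleGraph V) :
    ∃ S : Set V, Fintype.card V + 2 * S.ncard ≤
      2 * matchingNumber G + (restr G Sᶜ).oddComponents.ncard := by
  classical
  set ν := matchingNumber G
  rcases Nat.lt_or_ge (Fintype.card V) (2 * ν + 2) with hlt | hge
  -- here `S = ∅` works: if `card V` is odd, `G` has an odd component
  · refine ⟨∅, ?_⟩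
    rw [Set.ncard_empty]
    have hpar := odd_ncard_oddComponents (G := restr G (∅ : Set V)ᶜ)
    rw [Nat.card_eq_fintype_card] at hpar
    rcases Nat.even_or_odd (Fintype.card V) with he | ho
    · obtain ⟨r, hr⟩ := he
      omega
    · have := (hpar.2 ho).pos
      omega
  -- this `d` is too small by `2` for `cone G d` to have a perfect matching
  obtain ⟨d, hd⟩ := Nat.exists_eq_add_of_le hge
  have hno : ¬ ∃ M : (cone G d).Subgraph, M.IsPerfectMatching := by
    rintro ⟨M, hM⟩
    have := card_le_of_isPerfectMatching hM
    omega
  rw [tutte] at hno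
  push Not at hno
  obtain ⟨u, hu⟩ := hno
  rw [IsTutteViolator] at hu
  have hpar := odd_ncard_oddComponents
    (G := ((⊤ : (cone G d).Subgraph).deleteVerts u).coe)
  have hcard : Nat.card ((⊤ : (cone G d).Subgraph).deleteVerts u).verts + u.ncard =
      Fintype.card V + d := by
    have h1 : ((⊤ : (cone G d).Subgraph).deleteVerts u).verts = uᶜ := by
      ext x
      simp
    rw [Nat.card_coe_set_eq, h1, add_comm, Set.ncard_add_ncard_compl]
    simp
  -- `card V + d` is even, so the two sides of Tutte's inequality have the same parity
  have hgap : u.ncard + 2 ≤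
      ((⊤ : (cone G d).Subgraph).deleteVerts u).coe.oddComponents.ncard := by
    rw [Nat.odd_iff, Nat.odd_iff] at hpar
    omega
  by_cases hall : ∀ i, Sum.inr i ∈ u
  · refine ⟨Sum.inl ⁻¹' u, ?_⟩
    have h1 := ncard_add_ncard_oddComponents_le (G := G) hall
    have h2 : u.ncard = (Sum.inl ⁻¹' u : Set V).ncard + d := by
      have hu' : u = Sum.inl '' (Sum.inl ⁻¹' u : Set V) ∪ Set.range Sum.inr := by
        ext x
        cases x <;> simp [hall]
      conv_lhs => rw [hu']
      rw [Set.ncard_union_eq, Set.ncard_image_of_injective _ Sum.inl_injective,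
        ← Set.image_univ, Set.ncard_image_of_injective _ Sum.inr_injective, Set.ncard_univ,
        Nat.card_fin]
      rw [Set.disjoint_left]
      rintro _ ⟨s, _, rfl⟩ ⟨i, hi⟩
      simp at hi
    omega
  · -- a surviving new vertex is adjacent to everything, so only one component is left
    exfalso
    push Not at hall
    obtain ⟨i, hi⟩ := hall
    have hle : ((⊤ : (cone G d).Subgraph).deleteVerts u).coe.oddComponents.ncard ≤ 1 := by
      rw [Set.ncard_le_one_iff]
      have key : ∀ c : ((⊤ : (cone G d).Subgraph).deleteVerts u).coe.ConnectedComponent,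
          c = connectedComponentMk _ ⟨Sum.inr i, trivial, hi⟩ := by
        intro c
        induction c using ConnectedComponent.ind with | _ x
        refine ConnectedComponent.sound ?_
        by_cases hx : x = ⟨Sum.inr i, trivial, hi⟩
        · rw [hx]
        · refine (Adj.reachable ?_).symm
          rw [Subgraph.coe_adj, Subgraph.deleteVerts_adj]
          exact ⟨trivial, hi, trivial, x.2.2,
            cone_adj_inr fun h => hx (Subtype.ext h.symm)⟩
      intro a b _ _
      rw [key a, key b]
    omega

end MatchingBound

theorem stmt_3 (k : ℕ) (hk3 : 3 ≤ k) (hkodd : Odd k)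
    {V : Type*} [Fintype V] (G : SimpleGraph V) [DecidableRel G.Adj]
    (hconn : G.Connected) (hdeg : ∀ v, G.degree v ≤ k) :
    (((k : ℝ) - 1) / ((k : ℝ) * ((k : ℝ) ^ 2 - 3))) * (Fintype.card V : ℝ)
      + (((k : ℝ) ^ 2 - (k : ℝ) - 2) / ((k : ℝ) * ((k : ℝ) ^ 2 - 3))) * (G.edgeSet.ncard : ℝ)
      - ((k : ℝ) - 1) / ((k : ℝ) * ((k : ℝ) ^ 2 - 3))
      ≤ (matchingNumber G : ℝ) := by
  classical
  obtain ⟨S, hS⟩ := MatchingBound.tutte_berge G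
  set H := MatchingBound.restr G Sᶜ with hH
  have hι : Fintype.card H.ConnectedComponent ≤
      (G.edgeSet \ H.edgeSet).ncard + 1 := by
    rw [← Nat.card_eq_fintype_card]
    exact MatchingBound.card_component_le G hconn S
  have hX := MatchingBound.ncard_edges_meeting_le G S hdeg
  have hm := MatchingBound.ncard_edgeSet_le_sum G S
  have hn := MatchingBound.sum_ncard_supp H
  rw [← hH] at hX hm
  set X := (G.edgeSet \ H.edgeSet).ncard
  have hodd : ∑ c : H.ConnectedComponent, (if Odd c.supp.ncard then (1 : ℝ) else 0) =
      (H.oddComponents.ncard : ℝ) := by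
    rw [Finset.sum_boole, ← Set.ncard_coe_finset]
    simp [SimpleGraph.oddComponents]
  have hsum := Finset.sum_le_sum fun (c : H.ConnectedComponent) (_ : c ∈ Finset.univ) =>
    MatchingBound.component_bound hk3 hkodd
      (Nat.one_le_iff_ne_zero.2 (Set.ncard_ne_zero_of_mem c.nonempty_supp.some_mem))
      (MatchingBound.two_mul_ncard_restr_le_complete G c.supp)
      (MatchingBound.two_mul_ncard_restr_le_maxDegree G c.supp hdeg)
  rw [Finset.sum_add_distrib, ← Finset.mul_sum, ← Finset.mul_sum, ← Finset.mul_sum,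
    Finset.sum_sub_distrib, Finset.sum_sub_distrib, hodd, ← Nat.cast_sum, ← Nat.cast_sum, hn,
    Finset.sum_const, Finset.card_univ, nsmul_one] at hsum
  have hk : (3 : ℝ) ≤ k := by exact_mod_cast hk3
  have hD : 0 < (k : ℝ) * ((k : ℝ) ^ 2 - 3) := by
    apply mul_pos <;> nlinarith
  have hB : 0 ≤ (k : ℝ) ^ 2 - k - 2 := by nlinarith
  have hι' : (Fintype.card H.ConnectedComponent : ℝ) ≤ X + 1 := by exact_mod_cast hι
  have hX' : (X : ℝ) ≤ S.ncard * k := by exact_mod_cast hX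
  have hm' : (G.edgeSet.ncard : ℝ) ≤
      X + (∑ c : H.ConnectedComponent, (MatchingBound.restr G c.supp).edgeSet.ncard : ℕ) := by
    exact_mod_cast hm
  have hS' : (Fintype.card V : ℝ) + 2 * S.ncard ≤
      2 * matchingNumber G + H.oddComponents.ncard := by exact_mod_cast hS
  rw [div_mul_eq_mul_div, div_mul_eq_mul_div, ← add_div, ← sub_div, div_le_iff₀ hD]
  have e1 := mul_le_mul_of_nonneg_left hm' hB
  have e2 := mul_le_mul_of_nonneg_left hι' (by linarith : (0 : ℝ) ≤ (k : ℝ) - 1)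
  -- `(k - 1) + (k ^ 2 - k - 2) = k ^ 2 - 3`
  have e3 := mul_le_mul_of_nonneg_left hX' (by nlinarith : (0 : ℝ) ≤ (k : ℝ) ^ 2 - 3)
  have e4 := mul_le_mul_of_nonneg_left hS' hD.le
  nlinarith
end

section
/- If k ≥ 4 is an even integer and G is a finite connected simple graph with n vertices, m edges, and maximum degree at most k, then the matching number satisfies α'(G) ≥ ((k+2)/(k²+k+2))·m − ((k−2)/(k²+k+2))·n − (k+2)/(k²+k+2). -/
open Finset

universe u
/-! ### Counting degrees over the parts of `G - S` -/

/-- The estimate for one part of `G - S` with `N` vertices, internal degree sum `A` and `B` edges to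
`S`. The error `e` is only needed to be `1` for a nonempty part without edges to `S`. -/
lemma component_bound {k N A B e : ℤ} (hk4 : 4 ≤ k) (hke : Even k) (hN : 0 ≤ N) (hB : 0 ≤ B)
    (he : 0 ≤ e) (hA : Even A) (h1 : A ≤ N * (N - 1)) (h2 : A + B ≤ k * N)
    (h3 : N = 0 ∨ 1 ≤ B ∨ e = 1) :
    (k + 2) * A ≤ (2 * (k - 2) + (k ^ 2 + k + 2)) * N
      - (k ^ 2 + k + 2) * (if Odd N then 1 else 0) + 2 * (k + 2) * e := by
  split_ifs with hodd
  · obtain ⟨j, hj⟩ := hke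
    obtain ⟨a, ha⟩ := hA
    obtain ⟨t, ht⟩ := hodd
    rcases lt_or_ge N k with hlt | hge
    · -- Here `N ≠ k` by parity, and `A ≤ N (N - 1)` suffices for such a small part.
      have h4 : N ≤ k - 1 := by lia
      have h5 : (k + 2) * A ≤ (k + 2) * (N * (N - 1)) :=
        mul_le_mul_of_nonneg_left h1 (by lia)
      have h6 : (k + 2) * N * (N - 1) ≤ (k + 2) * (k - 1) * (N - 1) :=
        mul_le_mul_of_nonneg_right (mul_le_mul_of_nonneg_left h4 (by lia)) (by lia)
      have h7 : 0 ≤ (k - 2) * N := mul_nonneg (by lia) hN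
      have h8 : 0 ≤ (k + 2) * e := mul_nonneg (by lia) he
      nlinarith
    · have h4 : k + 1 ≤ N := by lia
      -- `A` and `k * N` are even, so a single edge to `S` lowers the bound on `A` by two.
      have h5 : A ≤ k * N - 2 + 2 * e := by
        have h6 : k * N = 2 * (j * N) := by rw [hj]; ring
        rw [h6] at h2 ⊢
        generalize j * N = x at *
        lia
      have h6 := mul_le_mul_of_nonneg_left h5 (show 0 ≤ k + 2 by lia)
      have h7 : 0 ≤ (k - 2) * (N - (k + 1)) := mul_nonneg (by lia) (by lia)
      nlinarith
  · have h5 : (k + 2) * A ≤ (k + 2) * (k * N) :=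
      mul_le_mul_of_nonneg_left (by lia) (by lia)
    have h7 : 0 ≤ (k - 2) * N := mul_nonneg (by lia) hN
    have h8 : 0 ≤ (k + 2) * e := mul_nonneg (by lia) he
    nlinarith

lemma even_sum_card_adj {V : Type*} [Fintype V] [DecidableEq V] (G : SimpleGraph V)
    [DecidableRel G.Adj] (F : Finset V) :
    Even (∑ v ∈ F, #{w ∈ F | G.Adj v w}) := by
  let H : SimpleGraph V :=
    { Adj v w := G.Adj v w ∧ v ∈ F ∧ w ∈ F
      symm := ⟨fun v w h ↦ ⟨h.1.symm, h.2.2, h.2.1⟩⟩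
      loopless := ⟨fun v h ↦ G.loopless.irrefl v h.1⟩ }
  classical
  have h := H.sum_degrees_eq_twice_card_edges
  have h2 : ∑ v ∈ F, #{w ∈ F | G.Adj v w} = ∑ v, H.degree v := by
    rw [← Finset.sum_subset (Finset.subset_univ F)]
    · refine Finset.sum_congr rfl fun v hv ↦ ?_
      rw [← SimpleGraph.card_neighborFinset_eq_degree]
      congr 1
      ext w
      simp [H, hv, and_comm]
    · intro v _ hv
      rw [← SimpleGraph.card_neighborFinset_eq_degree, Finset.card_eq_zero]
      ext w
      simp [H, hv]
  rw [h2, h]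
  exact even_two_mul _

lemma closed_eq_univ {V : Type*} {G : SimpleGraph V} (hconn : G.Connected) {F : Finset V}
    (hF : F.Nonempty) (hcl : ∀ v ∈ F, ∀ w, G.Adj v w → w ∈ F) (x : V) : x ∈ F := by
  obtain ⟨v, hv⟩ := hF
  obtain ⟨p⟩ := hconn.preconnected v x
  induction p with
  | nil => exact hv
  | cons h p ih => exact ih (hcl _ hv _ h)

/-- The degree count for `G - S`. The colouring `c` need only be constant on the components of
`G - S`; its values on `S` are irrelevant. -/
lemma counting {k : ℕ} (hk4 : 4 ≤ k) (hkeven : Even k)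
    {V : Type*} [Fintype V] [DecidableEq V] (G : SimpleGraph V) [DecidableRel G.Adj]
    (hconn : G.Connected) (hdeg : ∀ v, G.degree v ≤ k) {ι : Type*} [Fintype ι] [DecidableEq ι]
    (S : Finset V) (c : V → ι) (hc : ∀ v w, v ∉ S → w ∉ S → G.Adj v w → c v = c w) :
    ((k : ℤ) + 2) * (2 * #G.edgeFinset) ≤ 2 * (k - 2) * Fintype.card V
      + (k ^ 2 + k + 2) * (Fintype.card V + #S - #{i | Odd #{v ∈ Sᶜ | c v = i}})
      + 2 * (k + 2) := by
  -- Only the colour class of `v₀` can be nonempty without a neighbour in `S`.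
  obtain ⟨v₀⟩ := hconn.nonempty
  have hsplit (v : V) : G.degree v = #{w ∈ Sᶜ | G.Adj v w} + #{w ∈ S | G.Adj v w} := by
    rw [← SimpleGraph.card_neighborFinset_eq_degree, ← Finset.card_union_of_disjoint]
    · congr 1
      ext w
      simp only [SimpleGraph.mem_neighborFinset, mem_union, mem_filter, mem_compl]
      tauto
    · exact Finset.disjoint_filter_filter disjoint_compl_left
  let F (i : ι) : Finset V := {v ∈ Sᶜ | c v = i}
  obtain ⟨A, hA'⟩ : ∃ A : ι → ℕ, ∀ i, A i = ∑ v ∈ F i, #{w ∈ Sᶜ | G.Adj v w} :=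
    ⟨_, fun _ ↦ rfl⟩
  obtain ⟨B, hB'⟩ : ∃ B : ι → ℕ, ∀ i, B i = ∑ v ∈ F i, #{w ∈ S | G.Adj v w} :=
    ⟨_, fun _ ↦ rfl⟩
  have hnbr (i : ι) (v : V) (hv : v ∈ F i) :
      ({w ∈ Sᶜ | G.Adj v w} : Finset V) = {w ∈ F i | G.Adj v w} := by
    ext w
    simp only [F, mem_filter, mem_compl] at hv ⊢
    have := hc v w hv.1
    grind
  have hcomp (i : ι) : ((k : ℤ) + 2) * A i ≤ (2 * (k - 2) + (k ^ 2 + k + 2)) * #(F i)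
      - (k ^ 2 + k + 2) * (if Odd #(F i) then 1 else 0)
      + 2 * (k + 2) * (if i = c v₀ then 1 else 0) := by
    have hA : A i = ∑ v ∈ F i, #{w ∈ F i | G.Adj v w} :=
      (hA' i).trans <| Finset.sum_congr rfl fun v hv ↦ by rw [hnbr i v hv]
    have key := component_bound (k := k) (N := #(F i)) (A := A i) (B := B i)
      (e := if i = c v₀ then 1 else 0) (by exact_mod_cast hk4) ((Int.even_coe_nat k).2 hkeven)
      (Int.natCast_nonneg _) (Int.natCast_nonneg _) (by split_ifs <;> simp)
      ((Int.even_coe_nat _).2 (hA ▸ even_sum_card_adj G (F i))) ?_ ?_ ?_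
    · rwa [if_congr (Int.odd_coe_nat _) rfl rfl] at key
    · rw [hA, Nat.cast_sum]
      refine (Finset.sum_le_card_nsmul _ _ ((#(F i) : ℤ) - 1) fun v hv ↦ ?_).trans
        (by rw [nsmul_eq_mul])
      have h1 : #{w ∈ F i | G.Adj v w} ≤ #((F i).erase v) := by
        refine Finset.card_le_card fun w hw ↦ ?_
        simp only [mem_filter, mem_erase] at hw ⊢
        exact ⟨hw.2.ne', hw.1⟩
      have h2 := Finset.card_erase_add_one hv
      lia
    · have : A i + B i ≤ k * #(F i) := by
        rw [hA', hB', ← Finset.sum_add_distrib, mul_comm]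
        exact Finset.sum_le_card_nsmul _ _ _ fun v _ ↦ (hsplit v).symm.trans_le (hdeg v)
      exact_mod_cast this
    · by_contra! hcon
      obtain ⟨h1, h2, h3⟩ := hcon
      have hB : B i = 0 := by lia
      have hne : (F i).Nonempty := by
        rw [← Finset.card_pos]; lia
      have hv₀ := closed_eq_univ hconn hne (fun v hv w hvw ↦ by
        have h4 := Finset.sum_eq_zero_iff.1 ((hB' i).symm.trans hB) v hv
        rw [Finset.card_eq_zero, Finset.filter_eq_empty_iff] at h4
        have h5 : w ∈ ({w ∈ Sᶜ | G.Adj v w} : Finset V) := by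
          simp only [mem_filter, mem_compl]
          exact ⟨fun hw ↦ h4 hw hvw, hvw⟩
        rw [hnbr i v hv] at h5
        exact (Finset.mem_filter.1 h5).1) v₀
      exact h3 (by simp [(Finset.mem_filter.1 hv₀).2])
  have hsum := Finset.sum_le_sum fun i (_ : i ∈ (Finset.univ : Finset ι)) ↦ hcomp i
  rw [← Finset.mul_sum, Finset.sum_add_distrib, Finset.sum_sub_distrib, ← Finset.mul_sum,
    ← Finset.mul_sum, ← Finset.mul_sum, Finset.sum_ite_eq' Finset.univ (c v₀),
    if_pos (Finset.mem_univ _), Finset.sum_boole] at hsum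
  have hN : ∑ i, (#(F i) : ℤ) = Fintype.card V - #S := by
    have h1 := Finset.card_eq_sum_card_fiberwise (f := c) (s := Sᶜ) (t := Finset.univ)
      (fun _ _ ↦ by simp)
    have h2 := Finset.card_compl_add_card S
    have h3 : #Sᶜ = ∑ i, #(F i) := h1
    rw [← h2, h3]
    push_cast
    ring
  have hdegsum : 2 * #G.edgeFinset = ∑ i, A i + ∑ i, B i + ∑ v ∈ S, G.degree v := by
    rw [← G.sum_degrees_eq_twice_card_edges, ← Finset.sum_compl_add_sum S,
      ← Finset.sum_add_distrib, ← Finset.sum_fiberwise (s := Sᶜ) (g := c)]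
    congr 1
    refine Finset.sum_congr rfl fun i _ ↦ ?_
    rw [hA', hB', ← Finset.sum_add_distrib]
    exact Finset.sum_congr rfl fun v _ ↦ hsplit v
  have hS : ∑ v ∈ S, G.degree v ≤ k * #S := by
    rw [mul_comm]
    exact Finset.sum_le_card_nsmul _ _ _ fun v _ ↦ hdeg v
  have hBS : ∑ i, B i ≤ ∑ v ∈ S, G.degree v := by
    have h1 : ∑ i, B i = ∑ v ∈ Sᶜ, #{w ∈ S | G.Adj v w} := by
      simp only [hB']
      exact Finset.sum_fiberwise _ _ _
    have h2 : ∑ v ∈ Sᶜ, #{w ∈ S | G.Adj v w} = ∑ w ∈ S, #{v ∈ Sᶜ | G.Adj v w} :=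
      Finset.sum_card_bipartiteAbove_eq_sum_card_bipartiteBelow G.Adj
    rw [h1, h2]
    refine Finset.sum_le_sum fun w _ ↦ ?_
    rw [hsplit w]
    simp only [G.adj_comm w]
    exact Nat.le_add_right _ _
  have h1 : (2 * #G.edgeFinset : ℤ) ≤ ∑ i, (A i : ℤ) + 2 * (k * #S) := by
    exact_mod_cast (by lia : 2 * #G.edgeFinset ≤ ∑ i, A i + 2 * (k * #S))
  have h2 := mul_le_mul_of_nonneg_left h1 (show (0 : ℤ) ≤ k + 2 by positivity)
  rw [hN] at hsum
  refine h2.trans ?_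
  simp only [F] at hsum
  linarith

/-! ### The Tutte-Berge formula -/

lemma ncard_verts_le {V : Type*} [Fintype V] {G : SimpleGraph V} {M : G.Subgraph}
    (hM : M.IsMatching) : M.verts.ncard ≤ 2 * matchingNumber G := by
  classical
  have h1 : M.edgeSet.ncard ≤ matchingNumber G := by
    refine le_csSup ⟨Nat.card (Sym2 V), ?_⟩ ⟨M, hM, rfl⟩
    rintro n ⟨M', -, rfl⟩
    exact Set.ncard_le_card _
  have h2 : M.verts.ncard = 2 * M.edgeSet.ncard := by
    rw [← M.edgeSet_spanningCoe, ← SimpleGraph.coe_edgeFinset, Set.ncard_coe_finset,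
      ← M.spanningCoe.sum_degrees_eq_twice_card_edges, Set.ncard_eq_toFinset_card',
      Finset.card_eq_sum_ones,
      ← Finset.sum_subset (Finset.subset_univ M.verts.toFinset)]
    · refine Finset.sum_congr rfl fun v hv ↦ ?_
      rw [M.degree_spanningCoe, SimpleGraph.Subgraph.isMatching_iff_forall_degree.1 hM v
        (Set.mem_toFinset.1 hv)]
    · intro v _ hv
      rw [M.degree_spanningCoe, SimpleGraph.Subgraph.degree_of_notMem_verts
        (by simpa using hv)]
  lia

/-- The graph on `V ⊕ W` obtained from `G` by adding the vertices of `W` as universal vertices. -/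
def addUniversal {V : Type*} (G : SimpleGraph V) (W : Type*) : SimpleGraph (V ⊕ W) where
  Adj x y := x ≠ y ∧ ∀ a b, x = .inl a → y = .inl b → G.Adj a b
  symm := ⟨fun _ _ h ↦ ⟨h.1.symm, fun a b ha hb ↦ (h.2 b a hb ha).symm⟩⟩
  loopless := ⟨fun _ h ↦ h.1 rfl⟩

lemma addUniversal_inl {V W : Type*} {G : SimpleGraph V} {v w : V} :
    (addUniversal G W).Adj (.inl v) (.inl w) ↔ G.Adj v w := by
  refine ⟨fun h ↦ h.2 _ _ rfl rfl, fun h ↦ ⟨fun e ↦ h.ne (Sum.inl_injective e), ?_⟩⟩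
  rintro a b ⟨⟩ ⟨⟩
  exact h

/-- A perfect matching of `addUniversal G W`, restricted to `G`, leaves at most `|W|` vertices
uncovered. -/
lemma card_le_of_isPerfectMatching {V W : Type*} [Fintype V] [Fintype W] {G : SimpleGraph V}
    {M : (addUniversal G W).Subgraph} (hM : M.IsPerfectMatching) :
    Fintype.card V ≤ 2 * matchingNumber G + Fintype.card W := by
  classical
  let N : G.Subgraph :=
    { verts := {v | ∃ w, M.Adj (.inl v) (.inl w)}
      Adj v w := M.Adj (.inl v) (.inl w)
      adj_sub := fun h ↦ addUniversal_inl.1 (M.adj_sub h)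
      edge_vert := fun h ↦ ⟨_, h⟩
      symm := ⟨fun _ _ h ↦ h.symm⟩ }
  have hN : N.IsMatching := by
    rintro v ⟨w, hw⟩
    exact ⟨w, hw, fun y hy ↦ Sum.inl_injective (hM.1.eq_of_adj_left hy hw)⟩
  have h1 := ncard_verts_le hN
  have h2 : N.vertsᶜ.ncard ≤ Fintype.card W := by
    -- `f` sends an uncovered vertex to its partner in `W`; the extra value `inr ()` is a dummy
    -- for covered vertices.
    have h3 (v : V) : ∃ x : W ⊕ Unit, v ∈ N.vertsᶜ → ∃ y, x = .inl y ∧ M.Adj (.inl v) (.inr y) := by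
      by_cases hv : v ∈ N.vertsᶜ
      · obtain ⟨w, hw, -⟩ := hM.1 (hM.2 (.inl v))
        rcases w with w | w
        · exact (hv ⟨w, hw⟩).elim
        · exact ⟨.inl w, fun _ ↦ ⟨w, rfl, hw⟩⟩
      · exact ⟨.inr (), fun h ↦ (hv h).elim⟩
    choose f hf using h3
    have h4 : Set.InjOn f N.vertsᶜ := by
      intro a ha b hb hab
      obtain ⟨y, hy, hya⟩ := hf a ha
      obtain ⟨z, hz, hzb⟩ := hf b hb
      obtain rfl : y = z := Sum.inl_injective (by rw [← hy, ← hz, hab])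
      exact Sum.inl_injective (hM.1.eq_of_adj_right hya hzb)
    have h5 : f '' N.vertsᶜ ⊆ Set.range Sum.inl := by
      rintro _ ⟨a, ha, rfl⟩
      obtain ⟨y, hy, -⟩ := hf a ha
      exact ⟨y, hy.symm⟩
    rw [← h4.ncard_image]
    refine (Set.ncard_le_ncard h5).trans ?_
    rw [← Set.image_univ, Set.ncard_image_of_injective _ Sum.inl_injective, Set.ncard_univ,
      Nat.card_eq_fintype_card]
  have h3 := Set.ncard_add_ncard_compl N.verts
  rw [Nat.card_eq_fintype_card] at h3
  lia

/-- The nontrivial half of the Tutte-Berge formula, with the odd components of `G - S` replaced by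
the odd classes of a colouring that is constant on the components of `G - S`. -/
lemma exists_berge {V : Type u} [Fintype V] [DecidableEq V] (G : SimpleGraph V) :
    ∃ (ι : Type u) (_ : Fintype ι) (_ : DecidableEq ι) (S : Finset V) (c : V → ι),
      (∀ v w, v ∉ S → w ∉ S → G.Adj v w → c v = c w) ∧
      Fintype.card V + #S ≤ 2 * matchingNumber G + #{i | Odd #{v ∈ Sᶜ | c v = i}} := by
  classical
  -- If at most one vertex is missed by a maximum matching, `S = ∅` with a single colour works.
  rcases lt_or_ge (Fintype.card V) (2 * matchingNumber G + 2) with hlt | hge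
  · refine ⟨PUnit, inferInstance, inferInstance, ∅, fun _ ↦ PUnit.unit, fun _ _ _ _ _ ↦ rfl, ?_⟩
    by_cases hodd : Odd (Fintype.card V)
    · simp [hodd]
      lia
    · have := Nat.not_odd_iff_even.1 hodd
      simp [hodd]
      grind
  let d := Fintype.card V - 2 * matchingNumber G - 2
  let H := addUniversal G (Fin d)
  have hno : ¬ ∃ M : H.Subgraph, M.IsPerfectMatching := by
    rintro ⟨M, hM⟩
    have := card_le_of_isPerfectMatching hM
    rw [Fintype.card_fin] at this
    lia
  rw [SimpleGraph.tutte] at hno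
  push Not at hno
  obtain ⟨T, hT⟩ := hno
  rw [SimpleGraph.IsTutteViolator] at hT
  let D := (⊤ : H.Subgraph).deleteVerts T
  -- The enlarged graph has an even number of vertices, so parity improves the violation by one.
  have hT2 : T.ncard + 2 ≤ D.coe.oddComponents.ncard := by
    have h1 := D.coe.odd_ncard_oddComponents
    have h2 : Nat.card D.verts = Tᶜ.ncard := by
      rw [Nat.card_coe_set_eq]
      congr 1
      ext x
      simp [D]
    have h3 := Set.ncard_add_ncard_compl T
    rw [Nat.card_eq_fintype_card, Fintype.card_sum, Fintype.card_fin] at h3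
    rw [h2] at h1
    change T.ncard < D.coe.oddComponents.ncard at hT
    grind
  have hDadj (x y : D.verts) : D.coe.Adj x y ↔ H.Adj x y := by
    have hx := x.2
    have hy := y.2
    simp only [D, SimpleGraph.Subgraph.deleteVerts_verts, SimpleGraph.Subgraph.verts_top,
      Set.mem_sdiff] at hx hy
    simp [D, hx.2, hy.2]
  -- A universal vertex outside `T` would leave at most one component.
  have hall (i : Fin d) : .inr i ∈ T := by
    by_contra hi
    let x : D.verts := ⟨.inr i, by simp [D, hi]⟩
    have hr (y : D.verts) : D.coe.Reachable y x := by
      by_cases hyx : y = x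
      · rw [hyx]
      · refine SimpleGraph.Adj.reachable ((hDadj y x).2 ⟨fun h ↦ hyx (Subtype.ext h), ?_⟩)
        rintro a b - ⟨⟩
    have hs : D.coe.oddComponents ⊆ {D.coe.connectedComponentMk x} := by
      intro C _
      induction C using SimpleGraph.ConnectedComponent.ind with
      | h y => exact SimpleGraph.ConnectedComponent.sound (hr y)
    have := Set.ncard_le_ncard hs
    rw [Set.ncard_singleton] at this
    lia
  let S : Finset V := {v | .inl v ∈ T}
  have hmem (v : V) : v ∉ S ↔ .inl v ∈ D.verts := by simp [S, D]
  let c (v : V) : Option D.coe.ConnectedComponent :=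
    if h : .inl v ∈ D.verts then some (D.coe.connectedComponentMk ⟨.inl v, h⟩) else none
  have hcv (v : V) (h : .inl v ∈ D.verts) : c v = some (D.coe.connectedComponentMk ⟨.inl v, h⟩) :=
    dif_pos h
  have hTS : T.ncard = #S + d := by
    have : T = ((S.disjSum (Finset.univ : Finset (Fin d)) : Finset (V ⊕ Fin d)) : Set _) := by
      ext x
      rcases x with v | i
      · simp [S]
      · simp [hall i]
    rw [this, Set.ncard_coe_finset, Finset.card_disjSum, Finset.card_univ, Fintype.card_fin]
  refine ⟨Option D.coe.ConnectedComponent, Fintype.ofFinite _, inferInstance, S, c, ?_, ?_⟩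
  · intro v w hv hw hvw
    rw [hmem] at hv hw
    rw [hcv v hv, hcv w hw]
    exact congrArg some (SimpleGraph.ConnectedComponent.sound
      ((hDadj _ _).2 (addUniversal_inl.2 hvw)).reachable)
  · refine le_trans (b := 2 * matchingNumber G + D.coe.oddComponents.ncard) (by lia)
      (Nat.add_le_add_left ?_ _)
    rw [← Set.ncard_coe_finset,
      ← Set.ncard_image_of_injective _ (Option.some_injective D.coe.ConnectedComponent)]
    refine Set.ncard_le_ncard ?_
    rintro _ ⟨C, hC, rfl⟩
    have hC' : Odd C.supp.ncard := hC
    have hcard : #{v ∈ Sᶜ | c v = some C} = C.supp.ncard := by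
      rw [← Set.ncard_coe_finset, ← Set.ncard_image_of_injective _ Subtype.val_injective,
        ← Set.ncard_image_of_injective _ (Sum.inl_injective (α := V) (β := Fin d))]
      congr 1
      ext x
      constructor
      · rintro ⟨v, hv, rfl⟩
        simp only [coe_filter, mem_compl, Set.mem_ofPred_eq] at hv
        obtain ⟨hvS, hvC⟩ := hv
        rw [hmem] at hvS
        rw [hcv v hvS] at hvC
        exact ⟨⟨_, hvS⟩, Option.some_injective _ hvC, rfl⟩
      · rintro ⟨⟨y, hy⟩, hyC, rfl⟩
        rcases y with v | i
        · refine ⟨v, ?_, rfl⟩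
          simp only [coe_filter, mem_compl, Set.mem_ofPred_eq]
          exact ⟨(hmem v).2 hy, (hcv v hy).trans (congrArg some hyC)⟩
        · exact (hy.2 (hall i)).elim
    simp only [coe_filter, Set.mem_ofPred_eq, Finset.mem_univ, true_and]
    rwa [hcard]

theorem stmt_7 (k : ℕ) (hk4 : 4 ≤ k) (hkeven : Even k)
    {V : Type*} [Fintype V] (G : SimpleGraph V) [DecidableRel G.Adj]
    (hconn : G.Connected) (hdeg : ∀ v, G.degree v ≤ k) :
    (((k : ℝ) + 2) / ((k : ℝ) ^ 2 + (k : ℝ) + 2)) * (G.edgeSet.ncard : ℝ)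
      - (((k : ℝ) - 2) / ((k : ℝ) ^ 2 + (k : ℝ) + 2)) * (Fintype.card V : ℝ)
      - ((k : ℝ) + 2) / ((k : ℝ) ^ 2 + (k : ℝ) + 2)
      ≤ (matchingNumber G : ℝ) := by
  classical
  obtain ⟨ι, _, _, S, c, hc, hS⟩ := exists_berge G
  have h1 := counting hk4 hkeven G hconn hdeg S c hc
  rw [← Set.ncard_coe_finset, SimpleGraph.coe_edgeFinset] at h1
  have h2 : ((Fintype.card V : ℤ) + #S - #{i | Odd #{v ∈ Sᶜ | c v = i}}) ≤
      2 * matchingNumber G := by lia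
  have h3 := mul_le_mul_of_nonneg_left h2 (show (0 : ℤ) ≤ k ^ 2 + k + 2 by positivity)
  have h4 : ((k : ℤ) + 2) * G.edgeSet.ncard - (k - 2) * Fintype.card V - (k + 2) ≤
      matchingNumber G * (k ^ 2 + k + 2) := by linarith
  have h5 : ((k : ℝ) + 2) * G.edgeSet.ncard - (k - 2) * Fintype.card V - (k + 2) ≤
      matchingNumber G * ((k : ℝ) ^ 2 + k + 2) := by exact_mod_cast h4
  rw [div_mul_eq_mul_div, div_mul_eq_mul_div, ← sub_div, ← sub_div, div_le_iff₀ (by positivity)]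
  exact h5
end
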